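/- Let q be a prime power with q ≡ 3 (mod 4) and q ≥ 19. Then there exists a maximally nonassociative quasigroup of order q, i.e. a quasigroup operation on a set of cardinality q whose number of associative triples equals q. -/

import Mathlib

/-!
A map `f` on a finite abelian group such that `f` and `t ↦ t - f t` are bijective and `f 0 = 0`
gives an idempotent quasigroup `x ∗ y = x + f (y - x)`. It is maximally nonassociative if a single
equation in two variables has only the trivial solution, and this property passes to products.

Over a field of odd order `q ≡ 3 (mod 4)`, let `f` multiply squares by one constant and nonsquares
by another. If the two constants satisfy finitely many conditions on the quadratic characters of
polynomials in them, the equation has only the trivial solution. Over a prime field such constants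
are sought among ratios of small integers, whose characters depend only on the characters of small
primes. A decision tree on the latter settles every prime `p > 61`, except when the signs of the
small primes are those of the trivial character or of the Legendre symbol modulo `7`. In these cases
`5` or `-3` is a square, and the golden ratio or a primitive cube root of unity provides
one-parameter families of constants for which the conditions prescribe the quadratic character at
only seven or eight shifts of the parameter. Stepanov's method produces a suitable parameter once
`p` is large, and quadratic reciprocity forces an exceptional `p` to be that large.

The remaining orders are products of primes `p ≥ 19` and of `p ^ 2` and `p ^ 3` for `p = 3, 7, 11`,
where explicit constants are available.
-/

open Function

namespace MaxNonassoc

/-! ### Quasigroups from orthomorphisms -/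

/-- `m` is an idempotent quasigroup operation whose associative triples are exactly the diagonal
ones `(x, x, x)`. Idempotent operations are used because the class is closed under products. -/
structure IsIdempotentMaxNonassoc {Q : Type*} (m : Q → Q → Q) : Prop where
  bijective_left : ∀ a, Bijective fun x => m a x
  bijective_right : ∀ a, Bijective fun y => m y a
  idempotent : ∀ x, m x x = x
  eq_of_assoc : ∀ x y z, m (m x y) z = m x (m y z) → x = y ∧ y = z

/-- There is an idempotent maximally nonassociative quasigroup of order `n`. -/
def IsIdempotentMaxNonassocOrder (n : ℕ) : Prop :=
  ∃ (Q : Type) (m : Q → Q → Q), Nat.card Q = n ∧ IsIdempotentMaxNonassoc m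

theorem IsIdempotentMaxNonassoc.card_assoc_eq {Q : Type*} {m : Q → Q → Q}
    (hm : IsIdempotentMaxNonassoc m) :
    Nat.card {t : Q × Q × Q // m (m t.1 t.2.1) t.2.2 = m t.1 (m t.2.1 t.2.2)} = Nat.card Q := by
  refine Nat.card_congr
    { toFun := fun t => t.1.1
      invFun := fun x => ⟨(x, x, x), by simp only [hm.idempotent]⟩
      left_inv := ?_
      right_inv := fun _ => rfl }
  rintro ⟨⟨x, y, z⟩, hxyz⟩
  obtain ⟨rfl, rfl⟩ := hm.eq_of_assoc x y z hxyz
  rfl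

theorem IsIdempotentMaxNonassoc.prod {Q R : Type*} {m : Q → Q → Q} {l : R → R → R}
    (hm : IsIdempotentMaxNonassoc m) (hl : IsIdempotentMaxNonassoc l) :
    IsIdempotentMaxNonassoc fun x y : Q × R => (m x.1 y.1, l x.2 y.2) where
  bijective_left a := (hm.bijective_left a.1).prodMap (hl.bijective_left a.2)
  bijective_right a := (hm.bijective_right a.1).prodMap (hl.bijective_right a.2)
  idempotent x := Prod.ext (hm.idempotent x.1) (hl.idempotent x.2)
  eq_of_assoc x y z hxyz := by
    obtain ⟨hxy₁, hyz₁⟩ := hm.eq_of_assoc _ _ _ (congrArg Prod.fst hxyz)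
    obtain ⟨hxy₂, hyz₂⟩ := hl.eq_of_assoc _ _ _ (congrArg Prod.snd hxyz)
    exact ⟨Prod.ext hxy₁ hxy₂, Prod.ext hyz₁ hyz₂⟩

namespace IsIdempotentMaxNonassocOrder

theorem one : IsIdempotentMaxNonassocOrder 1 :=
  ⟨Unit, fun _ _ => (), Nat.card_unique,
    { bijective_left := fun _ => bijective_id
      bijective_right := fun _ => bijective_id
      idempotent := fun _ => rfl
      eq_of_assoc := fun _ _ _ _ => ⟨rfl, rfl⟩ }⟩

theorem mul {n k : ℕ} (hn : IsIdempotentMaxNonassocOrder n)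
    (hk : IsIdempotentMaxNonassocOrder k) : IsIdempotentMaxNonassocOrder (n * k) := by
  obtain ⟨Q, m, rfl, hm⟩ := hn
  obtain ⟨R, l, rfl, hl⟩ := hk
  exact ⟨Q × R, _, Nat.card_prod Q R, hm.prod hl⟩

theorem pow {n : ℕ} (hn : IsIdempotentMaxNonassocOrder n) (k : ℕ) :
    IsIdempotentMaxNonassocOrder (n ^ k) := by
  induction k with
  | zero => exact one
  | succ k ih => exact ih.mul hn

end IsIdempotentMaxNonassocOrder

/-- An orthomorphism of an abelian group (in the form that both `f` and `t ↦ t - f t` are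
injective, which suffices on a finite group) fixing `0`. -/
structure IsOrthomorphism {G : Type*} [AddCommGroup G] (f : G → G) : Prop where
  map_zero : f 0 = 0
  injective : Injective f
  sub_injective : Injective fun t => t - f t

/-- The equation expressing that `(x + y, y, z + y)` is an associative triple of the operation
`a ∗ b = a + f (b - a)`. -/
def AssocEquation {G : Type*} [AddCommGroup G] (f : G → G) (x z : G) : Prop :=
  f (f z - x) = f (-x) + f (z - x - f (-x))

namespace IsOrthomorphism

variable {G : Type*} [AddCommGroup G] {f : G → G}

theorem eq_zero_of_apply_eq_zero (hf : IsOrthomorphism f) {t : G} (ht : f t = 0) : t = 0 :=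
  hf.injective (ht.trans hf.map_zero.symm)

theorem eq_zero_of_apply_eq_self (hf : IsOrthomorphism f) {t : G} (ht : f t = t) : t = 0 :=
  hf.sub_injective (by simp only [ht, sub_self, hf.map_zero])

theorem eq_zero_of_assocEquation_zero_left (hf : IsOrthomorphism f) {z : G}
    (h : AssocEquation f 0 z) : z = 0 := by
  simp only [AssocEquation, sub_zero, neg_zero, hf.map_zero, zero_add] at h
  exact hf.eq_zero_of_apply_eq_self (hf.injective h)

theorem eq_zero_of_assocEquation_zero_right (hf : IsOrthomorphism f) {x : G}
    (h : AssocEquation f x 0) : x = 0 := by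
  simp only [AssocEquation, hf.map_zero, zero_sub, left_eq_add] at h
  have hfix : f (-x) = -x := (sub_eq_zero.1 (hf.eq_zero_of_apply_eq_zero h)).symm
  exact neg_eq_zero.1 (hf.eq_zero_of_apply_eq_self hfix)

theorem eq_zero_of_assocEquation_of_sub_eq_zero (hf : IsOrthomorphism f) {x z : G}
    (h : AssocEquation f x z) (hxz : z - x - f (-x) = 0) : z = 0 := by
  rw [AssocEquation, hxz, hf.map_zero, add_zero] at h
  exact hf.eq_zero_of_apply_eq_zero (by simpa using hf.injective h)

theorem eq_zero_of_assocEquation (hf : IsOrthomorphism f)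
    (h : ∀ x z, x ≠ 0 → z ≠ 0 → ¬ AssocEquation f x z) {x z : G} (hxz : AssocEquation f x z) :
    x = 0 ∧ z = 0 := by
  by_cases hx : x = 0
  · subst hx
    exact ⟨rfl, hf.eq_zero_of_assocEquation_zero_left hxz⟩
  by_cases hz : z = 0
  · subst hz
    exact ⟨hf.eq_zero_of_assocEquation_zero_right hxz, rfl⟩
  exact absurd hxz (h x z hx hz)

theorem isIdempotentMaxNonassoc [Finite G] (hf : IsOrthomorphism f)
    (h : ∀ x z, x ≠ 0 → z ≠ 0 → ¬ AssocEquation f x z) :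
    IsIdempotentMaxNonassoc fun x y => x + f (y - x) where
  bijective_left a := Finite.injective_iff_bijective.1 fun x y hxy => by
    simpa using hf.injective (add_left_cancel hxy)
  bijective_right a := Finite.injective_iff_bijective.1 fun x y hxy => by
    have hsub : a - x - f (a - x) = a - y - f (a - y) := by
      rw [sub_sub, sub_sub]
      exact congrArg (a - ·) hxy
    simpa using hf.sub_injective hsub
  idempotent x := by rw [sub_self, hf.map_zero, add_zero]
  eq_of_assoc x y z hxyz := by
    have hassoc : AssocEquation f (x - y) (z - y) := by
      rw [AssocEquation, neg_sub, show f (z - y) - (x - y) = y + f (z - y) - x by abel,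
        show z - y - (x - y) - f (y - x) = z - (x + f (y - x)) by abel]
      exact (add_left_cancel ((add_assoc _ _ _).symm.trans hxyz)).symm
    obtain ⟨hx, hz⟩ := hf.eq_zero_of_assocEquation h hassoc
    exact ⟨sub_eq_zero.1 hx, (sub_eq_zero.1 hz).symm⟩

theorem isIdempotentMaxNonassocOrder {G : Type} [AddCommGroup G] [Finite G] {f : G → G}
    (hf : IsOrthomorphism f) (h : ∀ x z, x ≠ 0 → z ≠ 0 → ¬ AssocEquation f x z) :
    IsIdempotentMaxNonassocOrder (Nat.card G) :=
  ⟨G, _, rfl, hf.isIdempotentMaxNonassoc h⟩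

end IsOrthomorphism

/-! ### Quadratic orthomorphisms -/

/-- A `±1`-valued character of a field with `χ (-1) = -1`. On a finite field of order
`q ≡ 3 (mod 4)` this is the quadratic character. -/
structure IsOddQuadratic {F : Type*} [Field F] (χ : MulChar F ℤ) : Prop where
  isQuadratic : χ.IsQuadratic
  neg_one : χ (-1) = -1

theorem isOddQuadratic_quadraticChar {F : Type*} [Field F] [Fintype F] [DecidableEq F]
    (hF : Fintype.card F % 4 = 3) : IsOddQuadratic (quadraticChar F) where
  isQuadratic := quadraticChar_isQuadratic F
  neg_one := by
    rw [quadraticChar_neg_one_iff_not_isSquare, FiniteField.isSquare_neg_one_iff]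
    exact not_not.2 hF

/-- The sign `1` or `-1` encoded by a Boolean. -/
def boolSign (b : Bool) : ℤ := if b then 1 else -1

namespace IsOddQuadratic

variable {F : Type*} [Field F] {χ : MulChar F ℤ}

theorem neg (h : IsOddQuadratic χ) (x : F) : χ (-x) = -χ x := by
  rw [← neg_one_mul, map_mul, h.neg_one, neg_one_mul]

theorem eq_one_or_neg_one (h : IsOddQuadratic χ) {x : F} (hx : x ≠ 0) : χ x = 1 ∨ χ x = -1 :=
  (h.isQuadratic x).resolve_left (hx.isUnit.map χ).ne_zero

theorem eq_boolSign (h : IsOddQuadratic χ) {x : F} (hx : x ≠ 0) :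
    χ x = boolSign (decide (χ x = 1)) := by
  rcases h.eq_one_or_neg_one hx with e | e <;> rw [e] <;> rfl

theorem apply_mul_self (h : IsOddQuadratic χ) {x : F} (hx : x ≠ 0) : χ (x * x) = 1 := by
  rw [map_mul]
  rcases h.eq_one_or_neg_one hx with e | e <;> rw [e] <;> rfl

end IsOddQuadratic

theorem ne_zero_of_apply_ne_zero {F : Type*} [Field F] {χ : MulChar F ℤ} {x : F} (hx : χ x ≠ 0) :
    x ≠ 0 := by
  rintro rfl
  exact hx χ.map_zero

/-- The condition on the characters `v, u, p, m` of the four quadratic forms attached to an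
ordered pair of coefficients under which their associativity equations have no solution. -/
def SideCondition (v u p m : ℤ) : Prop :=
  u ≠ 0 ∧ (p = 1 ∧ (m = -1 ∨ v = 1) ∨ u = -1 ∧ (p = -1 ∨ v = 1 ∨ m = -1))

instance (v u p m : ℤ) : Decidable (SideCondition v u p m) := by
  unfold SideCondition
  infer_instance

/-- Coefficients `c` for which `quadraticOrthomorphism χ c` is an orthomorphism whose quasigroup is
maximally nonassociative. -/
structure IsAdmissible {F : Type*} [Field F] (χ : MulChar F ℤ) (c : Bool → F) : Prop where
  apply_eq : ∀ b, χ (c b) = -1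
  apply_one_sub : ∀ b, χ (1 - c b) = 1
  apply_mixed : ∀ b, χ (1 - 2 * c b + c b * c (!b)) = -1
  side : ∀ b, SideCondition (χ (c b - c (!b) - c b * c (!b)))
    (χ (c (!b) * (1 - c b + c b ^ 2) - c b ^ 2)) (χ (c b ^ 2 - c (!b)))
    (χ (c (!b) ^ 2 - 2 * c (!b) + c b))

/-- The map multiplying the squares by `c true` and the nonsquares by `c false`. -/
def quadraticOrthomorphism {F : Type*} [Field F] (χ : MulChar F ℤ) (c : Bool → F) (t : F) : F :=
  c (decide (χ t = 1)) * t

theorem SideCondition.false_of_signs {v u p m : Bool → ℤ}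
    (hside : ∀ b, SideCondition (v b) (u b) (p b) (m b)) {i j r s : Bool} {w : ℤ}
    (hz : boolSign j * (if j = s ∨ r = s then 1 else p r) =
      -boolSign i * if r = i ∨ r = s then 1 else m (!i))
    (hr : boolSign r * (if j = s ∨ r = s then 1 else p r) =
      -boolSign i * if s = j then -1 else if i = j then u j else 1)
    (hs : boolSign s * (if j = s ∨ r = s then 1 else p r) = -boolSign i * w)
    (hwi : r = i → w = -1) (hwj : i ≠ j → r = j → w = v j) : False := by
  have htrue := hside true
  have hfalse := hside false
  simp only [SideCondition] at htrue hfalse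
  cases i <;> cases j <;> cases r <;> cases s <;> grind [boolSign]

namespace IsAdmissible

variable {F : Type*} [Field F] {χ : MulChar F ℤ} {c : Bool → F}

theorem apply_quadraticOrthomorphism (hc : IsAdmissible χ c) (t : F) :
    χ (quadraticOrthomorphism χ c t) = -χ t := by
  rw [quadraticOrthomorphism, map_mul, hc.apply_eq, neg_one_mul]

theorem sub_quadraticOrthomorphism (t : F) :
    t - quadraticOrthomorphism χ c t = (1 - c (decide (χ t = 1))) * t := by
  rw [quadraticOrthomorphism, one_sub_mul]

theorem apply_sub_quadraticOrthomorphism (hc : IsAdmissible χ c) (t : F) :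
    χ (t - quadraticOrthomorphism χ c t) = χ t := by
  rw [sub_quadraticOrthomorphism, map_mul, hc.apply_one_sub, one_mul]

theorem isOrthomorphism (hc : IsAdmissible χ c) :
    IsOrthomorphism (quadraticOrthomorphism χ c) where
  map_zero := mul_zero _
  injective t u htu := by
    have hχ : χ t = χ u := by
      simpa only [hc.apply_quadraticOrthomorphism, neg_inj] using congrArg χ htu
    have hne : c (decide (χ u = 1)) ≠ 0 :=
      ne_zero_of_apply_ne_zero (χ := χ) (by rw [hc.apply_eq]; decide)
    rw [quadraticOrthomorphism, quadraticOrthomorphism, hχ] at htu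
    exact mul_left_cancel₀ hne htu
  sub_injective t u htu := by
    have hχ : χ t = χ u := by
      simpa only [hc.apply_sub_quadraticOrthomorphism] using congrArg χ htu
    have hne : 1 - c (decide (χ u = 1)) ≠ 0 :=
      ne_zero_of_apply_ne_zero (χ := χ) (by rw [hc.apply_one_sub]; decide)
    simp only [sub_quadraticOrthomorphism, hχ] at htu
    exact mul_left_cancel₀ hne htu

theorem exists_boolSign (h : IsOddQuadratic χ) (c : Bool → F) {t : F} (ht : t ≠ 0) :
    ∃ b, χ t = boolSign b ∧ quadraticOrthomorphism χ c t = c b * t :=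
  ⟨_, h.eq_boolSign ht, rfl⟩

theorem apply_neg_mul_one_sub (hc : IsAdmissible χ c) (h : IsOddQuadratic χ) (a b : Bool) :
    χ (-(c a * (1 - c b))) = 1 := by
  rw [h.neg, map_mul, hc.apply_eq, hc.apply_one_sub]
  rfl

theorem apply_mul_sub (hc : IsAdmissible χ c) (h : IsOddQuadratic χ) (r j s : Bool) :
    χ (c r * c j - c s) = if j = s ∨ r = s then 1 else χ (c r ^ 2 - c (!r)) := by
  split_ifs with hs
  · rcases hs with rfl | rfl
    · rw [← hc.apply_neg_mul_one_sub h j r]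
      ring_nf
    · rw [← hc.apply_neg_mul_one_sub h r j]
      ring_nf
  · obtain ⟨rfl, rfl⟩ : j = r ∧ s = !r := by revert r j s; decide
    rw [sq]

theorem apply_sub_sub_add_mul (hc : IsAdmissible χ c) (h : IsOddQuadratic χ) (r i s : Bool) :
    χ (c r - c i - c s + c s * c i) =
      if r = i ∨ r = s then 1 else χ (c i ^ 2 - 2 * c i + c (!i)) := by
  split_ifs with hr
  · rcases hr with rfl | rfl
    · rw [← hc.apply_neg_mul_one_sub h s r]
      ring_nf
    · rw [← hc.apply_neg_mul_one_sub h i r]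
      ring_nf
  · obtain ⟨rfl, rfl⟩ : s = i ∧ r = !i := by revert r i s; decide
    ring_nf

theorem apply_mul_one_sub_sub (hc : IsAdmissible χ c) (i j s : Bool) :
    χ (c s * (1 - c j) - c j * c i * (1 - c s)) =
      if s = j then -1 else if i = j then χ (c (!j) * (1 - c j + c j ^ 2) - c j ^ 2) else 1 := by
  split_ifs with hs hi
  · subst hs
    rw [show c s * (1 - c s) - c s * c i * (1 - c s) = c s * (1 - c s) * (1 - c i) by ring,
      map_mul, map_mul, hc.apply_eq, hc.apply_one_sub, hc.apply_one_sub]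
    rfl
  · obtain ⟨rfl, rfl⟩ : s = !j ∧ i = j := by revert i j s; decide
    ring_nf
  · obtain ⟨rfl, rfl⟩ : s = !j ∧ i = !j := by revert i j s; decide
    rw [show c (!j) * (1 - c j) - c j * c (!j) * (1 - c (!j)) =
      c (!j) * (1 - 2 * c j + c j * c (!j)) by ring, map_mul, hc.apply_eq, hc.apply_mixed]
    rfl

theorem apply_mul_one_sub_add_sub_left (hc : IsAdmissible χ c) (h : IsOddQuadratic χ)
    (i j : Bool) : χ (c i * (1 - c j + c i * c j) - c i) = -1 := by
  rw [show c i * (1 - c j + c i * c j) - c i = -(c i * (1 - c i)) * c j by ring, map_mul,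
    hc.apply_neg_mul_one_sub h, hc.apply_eq, one_mul]

theorem apply_mul_one_sub_add_sub_right (hc : IsAdmissible χ c) {i j : Bool} (hij : i ≠ j) :
    χ (c j * (1 - c j + c i * c j) - c i) = χ (c j - c (!j) - c j * c (!j)) := by
  obtain rfl : i = !j := by revert i j; decide
  rw [show c j * (1 - c j + c (!j) * c j) - c (!j) = (1 - c j) * (c j - c (!j) - c j * c (!j)) by
    ring, map_mul, hc.apply_one_sub, one_mul]

theorem sub_ne_zero_of_assocEquation (hc : IsAdmissible χ c) {i j s : Bool} {x z : F} (hz : z ≠ 0)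
    (heq : c i * (-x) + c s * (z - x - c i * (-x)) = 0) : c j * z - x ≠ 0 := by
  intro hzero
  have hprod : z * (c s * (1 - c j) - c j * c i * (1 - c s)) = 0 := by
    linear_combination heq - (c s + c i - c i * c s) * hzero
  have hval := hc.apply_mul_one_sub_sub i j s
  rw [(mul_eq_zero.1 hprod).resolve_left hz, χ.map_zero] at hval
  have := (hc.side j).1
  split_ifs at hval <;> omega

/-- The signs of `-x`, `z` and of the two arguments occurring in the associativity equation
determine a linear equation between `x` and `z`; comparing characters in three consequences of it
contradicts the side conditions. -/
theorem assocEquation_signs (hc : IsAdmissible χ c) (h : IsOddQuadratic χ) {i j r s : Bool}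
    {x z : F} (hi : χ (-x) = boolSign i) (hj : χ z = boolSign j)
    (hr : χ (c j * z - x) = boolSign r) (hs : χ (z - x - c i * (-x)) = boolSign s) :
    c r * (c j * z - x) ≠ c i * (-x) + c s * (z - x - c i * (-x)) := by
  intro heq
  have hx : χ x = -boolSign i := by rw [← hi, h.neg, neg_neg]
  have hzx : z * (c r * c j - c s) = x * (c r - c i - c s + c s * c i) := by
    linear_combination heq
  have hrx : (c j * z - x) * (c r * c j - c s) =
      x * (c s * (1 - c j) - c j * c i * (1 - c s)) := by
    linear_combination c j * heq
  have hsx : (z - x - c i * (-x)) * (c r * c j - c s) =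
      x * (c r * (1 - c j + c i * c j) - c i) := by
    linear_combination heq
  have hχzx := congrArg χ hzx
  have hχrx := congrArg χ hrx
  have hχsx := congrArg χ hsx
  rw [map_mul, map_mul, hj, hx, hc.apply_mul_sub h, hc.apply_sub_sub_add_mul h] at hχzx
  rw [map_mul, map_mul, hr, hx, hc.apply_mul_sub h, hc.apply_mul_one_sub_sub] at hχrx
  rw [map_mul, map_mul, hs, hx, hc.apply_mul_sub h] at hχsx
  refine SideCondition.false_of_signs hc.side (i := i) (j := j) (r := r) (s := s)
    (by simpa only [Bool.not_not] using hχzx) hχrx hχsx ?_ fun hij hrj => ?_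
  · rintro rfl
    exact hc.apply_mul_one_sub_add_sub_left h r j
  · subst hrj
    exact hc.apply_mul_one_sub_add_sub_right hij

theorem not_assocEquation (hc : IsAdmissible χ c) (h : IsOddQuadratic χ) {x z : F} (hx : x ≠ 0)
    (hz : z ≠ 0) : ¬ AssocEquation (quadraticOrthomorphism χ c) x z := by
  intro heq
  have hw := mt (hc.isOrthomorphism.eq_zero_of_assocEquation_of_sub_eq_zero heq) hz
  obtain ⟨i, hi, hfi⟩ := exists_boolSign h c (neg_ne_zero.2 hx)
  obtain ⟨j, hj, hfj⟩ := exists_boolSign h c hz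
  obtain ⟨s, hs, hfs⟩ := exists_boolSign h c hw
  rw [AssocEquation, hfs, hfi, hfj] at heq
  rw [hfi] at hs
  have hzero : c j * z - x ≠ 0 := by
    intro h0
    rw [h0, hc.isOrthomorphism.map_zero] at heq
    exact hc.sub_ne_zero_of_assocEquation hz heq.symm h0
  obtain ⟨r, hr, hfr⟩ := exists_boolSign h c hzero
  rw [hfr] at heq
  exact hc.assocEquation_signs h hi hj hr hs heq

theorem isIdempotentMaxNonassocOrder {F : Type} [Field F] [Finite F] {χ : MulChar F ℤ}
    {c : Bool → F} (hc : IsAdmissible χ c) (h : IsOddQuadratic χ) :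
    IsIdempotentMaxNonassocOrder (Nat.card F) :=
  hc.isOrthomorphism.isIdempotentMaxNonassocOrder fun _ _ hx hz => hc.not_assocEquation h hx hz

end IsAdmissible

/-- The half of `IsSeed` that singles out the first of the two coordinates. -/
structure IsHalfSeed {R : Type*} [CommRing R] (χ : R → ℤ) (x y z : R) : Prop where
  apply_left : χ x = -1
  apply_add : χ (z + x) = 1
  apply_add_sub : χ (z + x - y) = -1
  side : SideCondition (χ (x * z - y * z - x * y)) (χ (y * z + (y - x) * x))
    (χ (x ^ 2 - 2 * x * y - y * z)) (χ (x * z - 2 * y * z - y ^ 2))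

/-- Homogeneous coordinates `(x, y, z)` of the admissible pair of coefficients `x / (z + x)` and
`y / (z + y)`. The sign function `χ` is arbitrary so that the same notion applies to characters of
fields and to partially known characters on the integers. -/
structure IsSeed {R : Type*} [CommRing R] (χ : R → ℤ) (x y z : R) : Prop where
  apply_right : χ z = 1
  left : IsHalfSeed χ x y z
  right : IsHalfSeed χ y x z

instance {R : Type*} [CommRing R] (χ : R → ℤ) (x y z : R) : Decidable (IsHalfSeed χ x y z) :=
  decidable_of_iff (χ x = -1 ∧ χ (z + x) = 1 ∧ χ (z + x - y) = -1 ∧ SideCondition _ _ _ _)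
    ⟨fun ⟨hx, hzx, hzxy, hside⟩ => ⟨hx, hzx, hzxy, hside⟩, fun ⟨hx, hzx, hzxy, hside⟩ =>
      ⟨hx, hzx, hzxy, hside⟩⟩

instance {R : Type*} [CommRing R] (χ : R → ℤ) (x y z : R) : Decidable (IsSeed χ x y z) :=
  decidable_of_iff (χ z = 1 ∧ IsHalfSeed χ x y z ∧ IsHalfSeed χ y x z)
    ⟨fun ⟨hz, hx, hy⟩ => ⟨hz, hx, hy⟩, fun ⟨hz, hx, hy⟩ => ⟨hz, hx, hy⟩⟩

theorem SideCondition.of_forall_ne_zero {v u p m v' u' p' m' : ℤ} (h : SideCondition v u p m)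
    (hv : v ≠ 0 → v' = v) (hu : u ≠ 0 → u' = u) (hp : p ≠ 0 → p' = p) (hm : m ≠ 0 → m' = m) :
    SideCondition v' u' p' m' := by
  unfold SideCondition at *
  omega

section IntCast

variable {R : Type*} [CommRing R] {χ : R → ℤ} {σ : ℤ → ℤ} {x y z : ℤ}

theorem IsHalfSeed.intCast (h : IsHalfSeed σ x y z) (hσ : ∀ n : ℤ, σ n ≠ 0 → χ n = σ n) :
    IsHalfSeed χ (x : R) (y : R) (z : R) := by
  obtain ⟨hx, hzx, hzxy, hside⟩ := h
  refine ⟨?_, ?_, ?_, hside.of_forall_ne_zero ?_ ?_ ?_ ?_⟩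
  · rw [hσ x (by omega), hx]
  · exact_mod_cast (hσ (z + x) (by omega)).trans hzx
  · exact_mod_cast (hσ (z + x - y) (by omega)).trans hzxy
  all_goals exact fun hne => by exact_mod_cast hσ _ hne

theorem IsSeed.intCast (h : IsSeed σ x y z) (hσ : ∀ n : ℤ, σ n ≠ 0 → χ n = σ n) :
    IsSeed χ (x : R) (y : R) (z : R) :=
  ⟨(hσ z (by rw [h.apply_right]; decide)).trans h.apply_right, h.left.intCast hσ,
    h.right.intCast hσ⟩

end IntCast

section Field

variable {F : Type*} [Field F] {χ : MulChar F ℤ} {x y z u v : F}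

theorem apply_div_of_apply_eq_one (hu : χ u = 1) : χ (x / u) = χ x := by
  have hu0 : u ≠ 0 := ne_zero_of_apply_ne_zero (χ := χ) (by rw [hu]; decide)
  rw [← mul_one (χ (x / u)), ← hu, ← map_mul, div_mul_cancel₀ x hu0]

theorem apply_eq_of_mul_eq_mul (hu : χ u = 1) (hv : χ v = 1) (h : x * u = y * v) : χ x = χ y := by
  simpa only [map_mul, hu, hv, mul_one] using congrArg χ h

theorem IsHalfSeed.apply_mixed (hz : χ z = 1) (hx : IsHalfSeed χ x y z) (hy : IsHalfSeed χ y x z) :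
    χ (1 - 2 * (x / (z + x)) + x / (z + x) * (y / (z + y))) = -1 := by
  have hu0 : z + x ≠ 0 := ne_zero_of_apply_ne_zero (χ := χ) (by rw [hx.apply_add]; decide)
  have hv0 : z + y ≠ 0 := ne_zero_of_apply_ne_zero (χ := χ) (by rw [hy.apply_add]; decide)
  rw [show 1 - 2 * (x / (z + x)) + x / (z + x) * (y / (z + y)) =
    z * (z + y - x) / (z + x) / (z + y) by field_simp; ring, apply_div_of_apply_eq_one hy.apply_add,
    apply_div_of_apply_eq_one hx.apply_add, map_mul, hz, hy.apply_add_sub, one_mul]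

theorem IsHalfSeed.sideCondition_div (hz : χ z = 1) (hx : IsHalfSeed χ x y z) (hy : χ (z + y) = 1) :
    SideCondition (χ (x / (z + x) - y / (z + y) - x / (z + x) * (y / (z + y))))
      (χ (y / (z + y) * (1 - x / (z + x) + (x / (z + x)) ^ 2) - (x / (z + x)) ^ 2))
      (χ ((x / (z + x)) ^ 2 - y / (z + y)))
      (χ ((y / (z + y)) ^ 2 - 2 * (y / (z + y)) + x / (z + x))) := by
  obtain ⟨-, hu, -, hside⟩ := hx
  have hu0 : z + x ≠ 0 := ne_zero_of_apply_ne_zero (χ := χ) (by rw [hu]; decide)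
  have hv0 : z + y ≠ 0 := ne_zero_of_apply_ne_zero (χ := χ) (by rw [hy]; decide)
  have huv : χ ((z + x) * (z + y)) = 1 := by rw [map_mul, hu, hy, one_mul]
  have huuv : χ ((z + x) ^ 2 * (z + y)) = 1 := by rw [map_mul, map_pow, hu, hy]; rfl
  have huvv : χ ((z + x) * (z + y) ^ 2) = 1 := by rw [map_mul, map_pow, hu, hy]; rfl
  convert hside using 1
  · exact apply_eq_of_mul_eq_mul huv χ.map_one (by field_simp; ring)
  · exact apply_eq_of_mul_eq_mul huuv hz (by field_simp; ring)
  · exact apply_eq_of_mul_eq_mul huuv hz (by field_simp; ring)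
  · exact apply_eq_of_mul_eq_mul huvv hz (by field_simp; ring)

theorem IsSeed.isAdmissible (h : IsSeed χ x y z) :
    IsAdmissible χ fun b => if b then x / (z + x) else y / (z + y) := by
  obtain ⟨hz, hx, hy⟩ := h
  have hone_sub : ∀ {a}, χ (z + a) = 1 → χ (1 - a / (z + a)) = 1 := fun {a} ha => by
    have ha0 : z + a ≠ 0 := ne_zero_of_apply_ne_zero (χ := χ) (by rw [ha]; decide)
    rw [one_sub_div ha0, add_sub_cancel_right, apply_div_of_apply_eq_one ha, hz]
  constructor <;> rintro (_ | _)
  · exact (apply_div_of_apply_eq_one hy.apply_add).trans hy.apply_left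
  · exact (apply_div_of_apply_eq_one hx.apply_add).trans hx.apply_left
  · exact hone_sub hy.apply_add
  · exact hone_sub hx.apply_add
  · exact hy.apply_mixed hz hx
  · exact hx.apply_mixed hz hy
  · exact hy.sideCondition_div hz hx.apply_add
  · exact hx.sideCondition_div hz hy.apply_add

theorem IsSeed.isIdempotentMaxNonassocOrder {F : Type} [Field F] [Finite F] {χ : MulChar F ℤ}
    {x y z : F} (hs : IsSeed χ x y z) (h : IsOddQuadratic χ) :
    IsIdempotentMaxNonassocOrder (Nat.card F) :=
  hs.isAdmissible.isIdempotentMaxNonassocOrder h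

end Field

/-! ### Orders `p ^ 2` -/

section Homogeneous

variable {K V : Type*} [Field K] [AddCommGroup V] [Module K V] {f : V → V}

theorem AssocEquation.smul (hsmul : ∀ (l : K) x, l ≠ 0 → f (l • x) = l • f x) {l : K} (hl : l ≠ 0)
    {x z : V} (h : AssocEquation f x z) : AssocEquation f (l • x) (l • z) := by
  unfold AssocEquation at *
  rw [← smul_neg, hsmul l z hl, hsmul l (-x) hl, ← smul_sub, ← smul_sub, ← smul_sub,
    hsmul l _ hl, hsmul l _ hl, h, smul_add]

theorem exists_smul_eq_of_ne_zero {x : K × K} (hx : x ≠ 0) :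
    ∃ l : K, l ≠ 0 ∧ (l • x = (0, 1) ∨ ∃ y, l • x = (1, y)) := by
  obtain ⟨u, v⟩ := x
  by_cases hu : u = 0
  · have hv : v ≠ 0 := by
      rintro rfl
      exact hx (Prod.ext hu rfl)
    exact ⟨v⁻¹, inv_ne_zero hv, Or.inl (by simp [hu, hv])⟩
  · exact ⟨u⁻¹, inv_ne_zero hu, Or.inr ⟨u⁻¹ * v, by simp [hu]⟩⟩

/-- For a homogeneous orthomorphism of a plane the associativity equation only has to be excluded
for one representative `x` of each line. -/
theorem IsOrthomorphism.isIdempotentMaxNonassocOrder_of_smul {K : Type} [Field K] [Finite K]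
    {f : K × K → K × K} (hf : IsOrthomorphism f)
    (hsmul : ∀ (l : K) x, l ≠ 0 → f (l • x) = l • f x)
    (hzero : ∀ z, ¬ AssocEquation f (0, 1) z) (hone : ∀ y z, ¬ AssocEquation f (1, y) z) :
    IsIdempotentMaxNonassocOrder (Nat.card K ^ 2) := by
  rw [sq, ← Nat.card_prod]
  refine hf.isIdempotentMaxNonassocOrder fun x z hx _ heq => ?_
  obtain ⟨l, hl, hlx⟩ := exists_smul_eq_of_ne_zero hx
  have hscaled := heq.smul hsmul hl
  rcases hlx with hlx | ⟨y, hlx⟩ <;> rw [hlx] at hscaled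
  · exact hzero _ hscaled
  · exact hone _ _ hscaled

end Homogeneous

/-- Multiplication of Gaussian numbers `a.1 + a.2 i`. -/
def gaussMul {R : Type*} [CommRing R] (a x : R × R) : R × R :=
  (a.1 * x.1 - a.2 * x.2, a.1 * x.2 + a.2 * x.1)

/-- The map on `𝔽_p[i]` multiplying the squares by `a` and the nonsquares by `b`; an element is a
square if and only if its norm is a square in `𝔽_p`, which is decided by Euler's criterion. -/
def gaussTwist (p : ℕ) (a b x : ZMod p × ZMod p) : ZMod p × ZMod p :=
  if (x.1 ^ 2 + x.2 ^ 2) ^ (p / 2) = 1 then gaussMul a x else gaussMul b x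

section GaussTwist

variable {p : ℕ} [Fact p.Prime] {a b : ZMod p × ZMod p}

theorem gaussTwist_smul (hp : Odd p) (l : ZMod p) (x : ZMod p × ZMod p) (hl : l ≠ 0) :
    gaussTwist p a b (l • x) = l • gaussTwist p a b x := by
  have hpow : (l ^ 2) ^ (p / 2) = 1 := by
    rw [← pow_mul, Nat.two_mul_odd_div_two (Nat.odd_iff.1 hp), ZMod.pow_card_sub_one_eq_one hl]
  have hnorm : ((l • x).1 ^ 2 + (l • x).2 ^ 2) ^ (p / 2) = (x.1 ^ 2 + x.2 ^ 2) ^ (p / 2) := by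
    rw [Prod.smul_fst, Prod.smul_snd, smul_eq_mul, smul_eq_mul, mul_pow, mul_pow, ← mul_add,
      mul_pow, hpow, one_mul]
  have hmul : ∀ c, gaussMul c (l • x) = l • gaussMul c x := fun c => by
    ext <;> simp only [gaussMul, Prod.smul_fst, Prod.smul_snd, smul_eq_mul] <;> ring
  simp only [gaussTwist, hnorm, hmul, smul_ite]

theorem isIdempotentMaxNonassocOrder_of_gaussTwist (hp : Odd p)
    {g k : ZMod p × ZMod p → ZMod p × ZMod p} (hg : LeftInverse g (gaussTwist p a b))
    (hk : LeftInverse k fun x => x - gaussTwist p a b x)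
    (hzero : ∀ z, ¬ AssocEquation (gaussTwist p a b) (0, 1) z)
    (hone : ∀ y z, ¬ AssocEquation (gaussTwist p a b) (1, y) z) :
    IsIdempotentMaxNonassocOrder (p ^ 2) := by
  have hf : IsOrthomorphism (gaussTwist p a b) :=
    { map_zero := by simp [gaussTwist, gaussMul]
      injective := hg.injective
      sub_injective := hk.injective }
  simpa only [Nat.card_zmod] using
    hf.isIdempotentMaxNonassocOrder_of_smul (gaussTwist_smul hp) hzero hone

end GaussTwist

instance {G : Type*} [AddCommGroup G] [DecidableEq G] (f : G → G) (x z : G) :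
    Decidable (AssocEquation f x z) := by
  unfold AssocEquation
  infer_instance

instance : Fact (Nat.Prime 7) := ⟨by norm_num⟩
instance : Fact (Nat.Prime 11) := ⟨by norm_num⟩

theorem isIdempotentMaxNonassocOrder_three_sq : IsIdempotentMaxNonassocOrder (3 ^ 2) :=
  isIdempotentMaxNonassocOrder_of_gaussTwist (a := (0, 1)) (b := (0, 2)) (by decide)
    (g := gaussTwist 3 (0, 2) (0, 1)) (k := gaussTwist 3 (2, 1) (2, 2))
    (by unfold LeftInverse; decide +kernel) (by unfold LeftInverse; decide +kernel)
    (by decide +kernel) (by decide +kernel)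

theorem isIdempotentMaxNonassocOrder_seven_sq : IsIdempotentMaxNonassocOrder (7 ^ 2) :=
  isIdempotentMaxNonassocOrder_of_gaussTwist (a := (0, 2)) (b := (2, 2)) (by decide)
    (g := gaussTwist 7 (0, 3) (2, 5)) (k := gaussTwist 7 (4, 6) (3, 6))
    (by unfold LeftInverse; decide +kernel) (by unfold LeftInverse; decide +kernel)
    (by decide +kernel) (by decide +kernel)

theorem isIdempotentMaxNonassocOrder_eleven_sq : IsIdempotentMaxNonassocOrder (11 ^ 2) :=
  isIdempotentMaxNonassocOrder_of_gaussTwist (a := (0, 1)) (b := (0, 7)) (by decide)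
    (g := gaussTwist 11 (0, 10) (0, 3)) (k := gaussTwist 11 (2, 3) (6, 6))
    (by unfold LeftInverse; decide +kernel) (by unfold LeftInverse; decide +kernel)
    (by decide +kernel) (by decide +kernel)

/-! ### Orders `p ^ 3` -/

theorem IsSeed.isIdempotentMaxNonassocOrder_of_norm {F K : Type} [CommRing F] [Finite F] [Field K]
    {χ : MulChar K ℤ} (h : IsOddQuadratic χ) (N : F →* K) (hN : ∀ w, N w = 0 ↔ w = 0)
    (hneg : N (-1) = -1) {x y z : F} (hs : IsSeed (fun w => χ (N w)) x y z) :
    IsIdempotentMaxNonassocOrder (Nat.card F) := by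
  have : Nontrivial F := ⟨0, 1, fun h01 => by simpa [← h01, (hN 0).2 rfl] using N.map_one⟩
  have : NoZeroDivisors F := ⟨fun {v w} hvw => by
    rw [← hN, map_mul, mul_eq_zero, hN, hN] at hvw
    exact hvw⟩
  have : IsDomain F := NoZeroDivisors.to_isDomain F
  let _ : Fintype F := Fintype.ofFinite F
  let _ : DecidableEq F := Classical.decEq F
  let _ : Field F := Fintype.fieldOfDomain F
  let ψ : MulChar F ℤ :=
    { toMonoidHom := (χ : K →* ℤ).comp N
      map_nonunit' := fun w hw => by
        obtain rfl : w = 0 := by simpa using hw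
        change χ (N 0) = 0
        rw [(hN 0).2 rfl, χ.map_zero] }
  have hψ : IsOddQuadratic ψ :=
    { isQuadratic := fun w => h.isQuadratic (N w)
      neg_one := (congrArg χ hneg).trans h.neg_one }
  exact IsSeed.isIdempotentMaxNonassocOrder (χ := ψ) hs hψ

/-- The algebra `R[θ]` with `θ ^ 3 = a θ + b`, in coordinates with respect to `1, θ, θ ^ 2`. Unlike
`AdjoinRoot` it supports evaluation by the kernel. -/
@[ext]
structure CubicAlgebra (R : Type*) (a b : R) where
  /-- The coefficient of `1`. -/
  c₀ : R
  /-- The coefficient of `θ`. -/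
  c₁ : R
  /-- The coefficient of `θ ^ 2`. -/
  c₂ : R
deriving DecidableEq

namespace CubicAlgebra

variable {R : Type*} {a b : R}

/-- The coordinates as a triple. -/
def equivProd (a b : R) : CubicAlgebra R a b ≃ R × R × R where
  toFun x := (x.c₀, x.c₁, x.c₂)
  invFun x := ⟨x.1, x.2.1, x.2.2⟩
  left_inv _ := rfl
  right_inv _ := rfl

instance [Fintype R] : Fintype (CubicAlgebra R a b) := .ofEquiv _ (equivProd a b).symm

theorem card_eq (a b : R) : Nat.card (CubicAlgebra R a b) = Nat.card R ^ 3 := by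
  rw [Nat.card_congr (equivProd a b), Nat.card_prod, Nat.card_prod, pow_three]

variable [CommRing R]

instance : Zero (CubicAlgebra R a b) := ⟨0, 0, 0⟩
instance : One (CubicAlgebra R a b) := ⟨1, 0, 0⟩
instance : Add (CubicAlgebra R a b) := ⟨fun x y => ⟨x.c₀ + y.c₀, x.c₁ + y.c₁, x.c₂ + y.c₂⟩⟩
instance : Neg (CubicAlgebra R a b) := ⟨fun x => ⟨-x.c₀, -x.c₁, -x.c₂⟩⟩
instance : Mul (CubicAlgebra R a b) := ⟨fun x y =>
  ⟨x.c₀ * y.c₀ + b * (x.c₁ * y.c₂ + x.c₂ * y.c₁),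
   x.c₀ * y.c₁ + x.c₁ * y.c₀ + a * (x.c₁ * y.c₂ + x.c₂ * y.c₁) + b * (x.c₂ * y.c₂),
   x.c₀ * y.c₂ + x.c₁ * y.c₁ + x.c₂ * y.c₀ + a * (x.c₂ * y.c₂)⟩⟩

theorem zero_def : (0 : CubicAlgebra R a b) = ⟨0, 0, 0⟩ := rfl
theorem one_def : (1 : CubicAlgebra R a b) = ⟨1, 0, 0⟩ := rfl
theorem add_def (x y : CubicAlgebra R a b) :
    x + y = ⟨x.c₀ + y.c₀, x.c₁ + y.c₁, x.c₂ + y.c₂⟩ := rfl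
theorem neg_def (x : CubicAlgebra R a b) : -x = ⟨-x.c₀, -x.c₁, -x.c₂⟩ := rfl
theorem mul_def (x y : CubicAlgebra R a b) : x * y =
  ⟨x.c₀ * y.c₀ + b * (x.c₁ * y.c₂ + x.c₂ * y.c₁),
   x.c₀ * y.c₁ + x.c₁ * y.c₀ + a * (x.c₁ * y.c₂ + x.c₂ * y.c₁) + b * (x.c₂ * y.c₂),
   x.c₀ * y.c₂ + x.c₁ * y.c₁ + x.c₂ * y.c₀ + a * (x.c₂ * y.c₂)⟩ := rfl

instance : CommRing (CubicAlgebra R a b) where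
  add_assoc _ _ _ := by ext <;> simp only [add_def] <;> ring
  zero_add _ := by ext <;> simp only [add_def, zero_def] <;> ring
  add_zero _ := by ext <;> simp only [add_def, zero_def] <;> ring
  add_comm _ _ := by ext <;> simp only [add_def] <;> ring
  neg_add_cancel _ := by ext <;> simp only [add_def, neg_def, zero_def] <;> ring
  mul_assoc _ _ _ := by ext <;> simp only [mul_def] <;> ring
  one_mul _ := by ext <;> simp only [mul_def, one_def] <;> ring
  mul_one _ := by ext <;> simp only [mul_def, one_def] <;> ring
  zero_mul _ := by ext <;> simp only [mul_def, zero_def] <;> ring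
  mul_zero _ := by ext <;> simp only [mul_def, zero_def] <;> ring
  left_distrib _ _ _ := by ext <;> simp only [mul_def, add_def] <;> ring
  right_distrib _ _ _ := by ext <;> simp only [mul_def, add_def] <;> ring
  mul_comm _ _ := by ext <;> simp only [mul_def] <;> ring
  nsmul := nsmulRec
  zsmul := zsmulRec

/-- The norm `R[θ] → R`, the determinant of multiplication by `x`. -/
def norm : CubicAlgebra R a b →* R where
  toFun x := x.c₀ * ((x.c₀ + a * x.c₂) ^ 2 - x.c₁ * (a * x.c₁ + b * x.c₂)) -
    x.c₁ * (b * x.c₂ * (x.c₀ + a * x.c₂) - b * x.c₁ ^ 2) +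
    b * x.c₂ * (x.c₂ * (a * x.c₁ + b * x.c₂) - (x.c₀ + a * x.c₂) * x.c₁)
  map_one' := by simp only [one_def]; ring
  map_mul' x y := by simp only [mul_def]; ring

theorem norm_neg_one : norm (-1 : CubicAlgebra R a b) = -1 := by
  simp only [norm, MonoidHom.coe_mk, OneHom.coe_mk, neg_def, one_def]
  ring

end CubicAlgebra

theorem isIdempotentMaxNonassocOrder_cube {p : ℕ} [Fact p.Prime] (hp : p % 4 = 3) {a b : ZMod p}
    {x y z : CubicAlgebra (ZMod p) a b}
    (hnorm : ∀ w : CubicAlgebra (ZMod p) a b, w.norm = 0 ↔ w = 0)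
    (hs : IsSeed (fun w : CubicAlgebra (ZMod p) a b => quadraticChar (ZMod p) w.norm) x y z) :
    IsIdempotentMaxNonassocOrder (p ^ 3) := by
  have hodd : IsOddQuadratic (quadraticChar (ZMod p)) :=
    isOddQuadratic_quadraticChar (by rwa [ZMod.card])
  simpa only [CubicAlgebra.card_eq, Nat.card_zmod] using
    IsSeed.isIdempotentMaxNonassocOrder_of_norm hodd _ hnorm CubicAlgebra.norm_neg_one hs

theorem isIdempotentMaxNonassocOrder_three_cube : IsIdempotentMaxNonassocOrder (3 ^ 3) :=
  isIdempotentMaxNonassocOrder_cube rfl (a := 1) (b := 1) (x := ⟨0, 1, 2⟩) (y := ⟨2, 2, 1⟩)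
    (z := 1) (by decide +kernel) (by decide +kernel)

theorem isIdempotentMaxNonassocOrder_seven_cube : IsIdempotentMaxNonassocOrder (7 ^ 3) :=
  isIdempotentMaxNonassocOrder_cube rfl (a := 0) (b := 2) (x := ⟨0, 0, 3⟩) (y := ⟨0, 1, 3⟩)
    (z := 1) (by decide +kernel) (by decide +kernel)

theorem isIdempotentMaxNonassocOrder_eleven_cube : IsIdempotentMaxNonassocOrder (11 ^ 3) :=
  isIdempotentMaxNonassocOrder_cube rfl (a := 1) (b := 3) (x := ⟨0, 0, 2⟩) (y := ⟨0, 4, 7⟩)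
    (z := 1) (by decide +kernel) (by decide +kernel)

/-! ### Characters with prescribed values at small primes -/

/-- Values of a character at some primes, as pairs `(q, χ q)`. -/
abbrev SignTable := List (ℕ × ℤ)

namespace SignTable

/-- The character value at `n` that follows from a table by dividing out at most `k` table entries
and primes of the table, and `0` if this does not determine it. -/
def natSign : ℕ → SignTable → ℕ → ℤ
  | 0, _, _ => 0
  | _ + 1, [], n => if n = 1 then 1 else 0
  | k + 1, (q, e) :: t, n => if q ∣ n then e * natSign k ((q, e) :: t) (n / q) else natSign k t n

/-- The value at `n` of an odd character with the given table, and `0` if it is not determined. The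
bound `100` is merely large enough for all integers that occur. -/
def sign (t : SignTable) (n : ℤ) : ℤ :=
  if 0 ≤ n then natSign 100 t n.natAbs else -natSign 100 t n.natAbs

variable {F : Type*} [Field F] {χ : MulChar F ℤ} {t : SignTable}

/-- The table lists correct values of the character `χ`. -/
def Holds (t : SignTable) (χ : MulChar F ℤ) : Prop :=
  ∀ a ∈ t, χ (a.1 : F) = a.2

theorem Holds.cons {q : ℕ} {e : ℤ} (ht : t.Holds χ) (hq : χ (q : F) = e) :
    SignTable.Holds ((q, e) :: t) χ :=
  List.forall_mem_cons.2 ⟨hq, ht⟩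

theorem Holds.apply_natCast (ht : t.Holds χ) {k n : ℕ} (hn : natSign k t n ≠ 0) :
    χ (n : F) = natSign k t n := by
  induction k, t, n using natSign.induct with
  | case1 => exact absurd rfl hn
  | case2 => simp [natSign]
  | case3 k n hn1 => simp [natSign, hn1] at hn
  | case4 k q e t n hqn ih =>
    simp only [natSign, hqn, if_true] at hn ⊢
    have hq : χ (q : F) = e := (List.forall_mem_cons.1 ht).1
    rw [← ih ht (right_ne_zero_of_mul hn), ← hq, ← map_mul, ← Nat.cast_mul,
      Nat.mul_div_cancel' hqn]
  | case5 k q e t n hqn ih =>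
    simp only [natSign, hqn, if_false] at hn ⊢
    exact ih (List.forall_mem_cons.1 ht).2 hn

theorem Holds.apply_intCast (ht : t.Holds χ) (h : IsOddQuadratic χ) {n : ℤ} (hn : t.sign n ≠ 0) :
    χ (n : F) = t.sign n := by
  unfold sign at hn ⊢
  split_ifs at hn ⊢ with h0
  · rw [← ht.apply_natCast hn, ← Int.cast_natCast, Int.natAbs_of_nonneg h0]
  · rw [← ht.apply_natCast (neg_ne_zero.1 hn), ← h.neg, ← Int.cast_natCast,
      Int.ofNat_natAbs_of_nonpos (not_le.1 h0).le, Int.cast_neg, neg_neg]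

end SignTable

/-- A decision tree branching on the sign of a character at successive primes. The first subtree of
a node is for the sign `1`. -/
inductive SeedTree where
  /-- No seed is provided. -/
  | exceptional : SeedTree
  /-- The integers `x`, `y`, `z` are a seed. -/
  | leaf (x y z : ℤ) : SeedTree
  /-- A branching. -/
  | node (pos neg : SeedTree) : SeedTree

/-- The branchings of the tree are at the given primes, and its leaves are seeds for every odd
quadratic character with the collected signs, with the tables in `exc` as the only exceptions. -/
def SeedTree.IsValid (exc : List SignTable) : SeedTree → SignTable → List ℕ → Prop
  | exceptional, t, _ => t ∈ exc
  | leaf x y z, t, _ => IsSeed t.sign x y z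
  | node _ _, _, [] => False
  | node pos neg, t, q :: qs =>
    pos.IsValid exc ((q, 1) :: t) qs ∧ neg.IsValid exc ((q, -1) :: t) qs

instance SeedTree.decidableIsValid (exc : List SignTable) :
    ∀ (T : SeedTree) (t : SignTable) (qs : List ℕ), Decidable (T.IsValid exc t qs)
  | exceptional, t, _ => inferInstanceAs (Decidable (t ∈ exc))
  | leaf x y z, t, _ => inferInstanceAs (Decidable (IsSeed t.sign x y z))
  | node _ _, _, [] => inferInstanceAs (Decidable False)
  | node pos neg, t, q :: qs =>
    have := pos.decidableIsValid exc ((q, 1) :: t) qs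
    have := neg.decidableIsValid exc ((q, -1) :: t) qs
    inferInstanceAs (Decidable (_ ∧ _))

theorem SeedTree.IsValid.exists_isSeed_or_holds {F : Type*} [Field F] {χ : MulChar F ℤ}
    (h : IsOddQuadratic χ) {exc : List SignTable} {T : SeedTree} {t : SignTable} {qs : List ℕ}
    (hT : T.IsValid exc t qs) (ht : t.Holds χ) (hqs : ∀ q ∈ qs, (q : F) ≠ 0) :
    (∃ x y z, IsSeed χ x y z) ∨ ∃ t ∈ exc, t.Holds χ := by
  induction T, t, qs using SeedTree.IsValid.induct with
  | case1 => exact Or.inr ⟨_, hT, ht⟩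
  | case2 => exact Or.inl ⟨_, _, _, IsSeed.intCast hT fun _ => ht.apply_intCast h⟩
  | case3 => exact hT.elim
  | case4 pos neg t q qs ihpos ihneg =>
    rw [List.forall_mem_cons] at hqs
    rcases h.eq_one_or_neg_one hqs.1 with hq | hq
    · exact ihpos hT.1 (ht.cons hq) hqs.2
    · exact ihneg hT.2 (ht.cons hq) hqs.2

/-- All primes up to `43` have sign `1`. -/
def trivialTable : SignTable :=
  [(43, 1), (41, 1), (37, 1), (31, 1), (29, 1), (23, 1), (19, 1), (17, 1), (13, 1), (11, 1),
    (7, 1), (5, 1), (3, 1), (2, 1)]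

/-- The primes up to `61` other than `7` have the sign of the Legendre symbol `(· / 7)`, and the
sign of `7` is `e`. -/
def legendreSevenTable (e : ℤ) : SignTable :=
  [(61, -1), (59, -1), (53, 1), (47, -1), (43, 1), (41, -1), (37, 1), (31, -1), (29, 1), (23, 1),
    (19, -1), (17, -1), (13, -1), (11, 1), (7, e), (5, -1), (3, -1), (2, 1)]

/-- A tree, found by computer search, over the primes up to `61`. -/
def seedTree : SeedTree :=
  .node (.node (.node (.node (.node (.node (.node (.node (.node (.node (.node (.node (.node (.node
    .exceptional (.leaf (-1395) (-124) 492)) (.node (.node (.node (.node (.node (.leaf (-312)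
    (-91) 189) (.leaf (-56) (-10) 15)) (.leaf 82 123 18)) (.leaf (-50) (-6) 9)) (.leaf 82 123 6))
    (.leaf (-75) (-25) 32))) (.leaf (-600) (-90) 119)) (.leaf (-475) (-175) 196)) (.node (.leaf
    (-187) (-55) 100) (.leaf (-46) (-3) 15))) (.leaf (-240) (-20) 33)) (.node (.node (.node (.leaf
    (-217) (-35) 65) (.leaf (-91) (-13) 15)) (.leaf (-12) (-7) 24)) (.leaf (-39) (-13) 20)))
    (.node (.leaf (-100) (-30) 49) (.node (.leaf (-77) (-35) 110) (.leaf (-9) (-6) 20)))) (.node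
    (.leaf (-112) (-16) 21) (.node (.leaf (-49) (-7) 10) (.leaf (-12) (-9) 16)))) (.node (.leaf
    (-54) (-9) 10) (.leaf (-9) (-8) 12))) (.node (.node (.node (.leaf (-20) (-5) 6) (.node (.leaf
    (-16) (-4) 9) (.leaf (-20) (-5) 6))) (.leaf 14 21 6)) (.leaf (-3) (-1) 9))) (.node (.node
    (.leaf (-9) (-3) 4) (.node (.leaf (-9) (-3) 4) (.node (.leaf (-7) (-3) 9) (.leaf (-21) (-3)
    4)))) (.node (.leaf (-4) (-3) 6) (.leaf (-8) (-6) 9)))) (.node (.node (.node (.leaf (-5) (-1)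
    2) (.node (.node (.leaf (-4) 6 1) (.leaf (-18) 3 1)) (.node (.leaf (-4) 6 1) (.leaf (-14) (-5)
    2)))) (.node (.node (.node (.node (.leaf (-19) (-11) 4) (.leaf (-44) (-17) 11)) (.leaf (-4) 6
    5)) (.leaf (-16) (-4) 1)) (.leaf 12 11 (-3)))) (.node (.node (.node (.leaf 3 12 1) (.node
    (.node (.leaf (-7) 13 4) (.leaf 3 21 1)) (.node (.leaf 21 5 (-3)) (.node (.node (.node (.leaf
    12 27 4) (.node (.node (.leaf 26 35 15) (.node (.node (.leaf 35 45 2) (.node (.node (.leaf 38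
    (-15) (-6)) (.node (.leaf 41 287 2) .exceptional)) (.leaf 53 12 (-3)))) (.leaf (-51) (-7) 8)))
    (.leaf (-11) 55 8))) (.leaf 3 21 11)) (.leaf 13 23 2))))) (.node (.leaf 3 12 1) (.node (.leaf
    (-4) 6 1) (.leaf 21 13 (-24))))) (.node (.node (.node (.node (.node (.leaf 20 12 (-3)) (.leaf
    3 12 1)) (.leaf (-2) 6 11)) (.leaf (-4) 12 1)) (.node (.node (.leaf 6 10 9) (.leaf (-2) 6 11))
    (.node (.leaf 7 (-9) (-3)) (.node (.node (.node (.leaf 34 (-2) (-3)) (.node (.node (.leaf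
    (-39) 26 15) (.node (.node (.leaf 45 63 2) (.node (.node (.leaf (-21) 55 4) (.node (.leaf 14
    (-295) (-10)) .exceptional)) (.leaf (-4) 48 1))) (.leaf 111 (-84) (-20)))) (.leaf (-39) (-21)
    2))) (.leaf 52 (-16) (-13))) (.leaf 28 (-11) (-12)))))) (.node (.leaf (-13) (-9) 2) (.leaf 11
    5 (-3))))))) (.node (.node (.node (.leaf (-3) (-1) 4) (.node (.node (.leaf (-3) 2 1) (.node
    (.leaf (-16) 13 3) (.leaf (-11) 7 4))) (.node (.leaf (-3) 2 1) (.node (.leaf (-16) 13 3)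
    (.node (.leaf (-3) 2 1) (.node (.leaf (-77) (-56) 78) (.leaf (-36) (-27) 4))))))) (.node
    (.leaf (-4) (-3) 7) (.leaf (-3) (-1) 4))) (.node (.leaf (-4) 3 1) (.leaf 3 (-1) (-2))))

theorem seedTree_isValid :
    seedTree.IsValid [trivialTable, legendreSevenTable 1, legendreSevenTable (-1)] []
      [2, 3, 5, 7, 11, 13, 17, 19, 23, 29, 31, 37, 41, 43, 47, 53, 59, 61] := by
  decide +kernel

theorem exists_isSeed_or_holds_table {F : Type*} [Field F] {χ : MulChar F ℤ}
    (h : IsOddQuadratic χ) (hF : ∀ q : ℕ, 0 < q → q < 62 → (q : F) ≠ 0) :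
    (∃ x y z, IsSeed χ x y z) ∨ trivialTable.Holds χ ∨
      (legendreSevenTable 1).Holds χ ∨ (legendreSevenTable (-1)).Holds χ := by
  simpa only [List.mem_cons, List.not_mem_nil, or_false, exists_eq_or_imp, exists_eq_left] using
    seedTree_isValid.exists_isSeed_or_holds h (by simp [SignTable.Holds])
      fun q hq => hF q (by revert q; decide) (by revert q; decide)

/-! ### Stepanov's bound -/

section CharacterSums

open Polynomial

section Multiplicity

variable {K : Type*} [Field K]

theorem mul_card_le_natDegree_of_le_rootMultiplicity {g : K[X]} {N : Finset K} {M : ℕ}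
    (hN : ∀ x ∈ N, M ≤ g.rootMultiplicity x) : M * N.card ≤ g.natDegree := by
  classical
  have hle : M • N.val ≤ g.roots := Multiset.le_iff_count.2 fun x => by
    rw [Multiset.count_nsmul, count_roots]
    by_cases hx : x ∈ N
    · simpa [Multiset.count_eq_one_of_mem N.nodup hx] using hN x hx
    · simp [Multiset.count_eq_zero_of_notMem (show x ∉ N.val from hx)]
  simpa using (Multiset.card_le_card hle).trans (card_roots' g)

theorem exists_ne_zero_forall_apply_eq_zero {V ι : Type*} [AddCommGroup V] [Module K V]
    [Module.Finite K V] [Fintype ι] (T : ι → V →ₗ[K] K[X]) (d : ι → ℕ)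
    (hT : ∀ i v, (T i v).natDegree < d i) (hd : ∑ i, d i < Module.finrank K V) :
    ∃ v ≠ 0, ∀ i, T i v = 0 := by
  have hmem : ∀ i v, T i v ∈ degreeLT K (d i) := fun i v =>
    mem_degreeLT.2 (degree_le_natDegree.trans_lt (by exact_mod_cast hT i v))
  let S : V →ₗ[K] ∀ i, degreeLT K (d i) :=
    LinearMap.pi fun i => (T i).codRestrict (degreeLT K (d i)) (hmem i)
  have hfinite : ∀ i, Module.Finite K (degreeLT K (d i)) := fun i =>
    .of_basis (degreeLT.basis K (d i))
  have hker : LinearMap.ker S ≠ ⊥ := LinearMap.ker_ne_bot_of_finrank_lt <| by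
    simpa [Module.finrank_pi_fintype, Module.finrank_eq_card_basis (degreeLT.basis K _)] using hd
  obtain ⟨v, hv, hv0⟩ := Submodule.exists_mem_ne_zero_of_ne_bot hker
  exact ⟨v, hv0, fun i => congrArg Subtype.val (congrFun hv i)⟩

theorem eq_zero_of_sq_mul_eq_C_mul_sq {f r s : K[X]} {a c : K} (hc : c ≠ 0)
    (hf : f.rootMultiplicity a = 1) (h : r ^ 2 * f = C c * s ^ 2) : r = 0 ∧ s = 0 := by
  have hf0 : f ≠ 0 := by
    rintro rfl
    simp at hf
  have hC : C c ≠ 0 := C_ne_zero.2 hc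
  by_cases hr : r = 0
  · simpa [hr, hC, eq_comm] using h
  have hl : r ^ 2 * f ≠ 0 := mul_ne_zero (pow_ne_zero 2 hr) hf0
  have hs : s ≠ 0 := by
    rintro rfl
    simp [h] at hl
  have hmul := congrArg (rootMultiplicity a) h
  rw [rootMultiplicity_mul hl, rootMultiplicity_mul (h ▸ hl), rootMultiplicity_C, sq, sq,
    rootMultiplicity_mul (mul_ne_zero hr hr), rootMultiplicity_mul (mul_ne_zero hs hs), hf] at hmul
  omega

end Multiplicity

section ReducedDerivative

variable {R : Type*} [CommRing R]

/-- The operator `L` with `(f ^ c * r)⁽ᵏ⁾ = f ^ (c - k) * L r`. -/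
noncomputable def reducedDerivative (f : R[X]) (c : ℕ) : ℕ → R[X] →ₗ[R] R[X]
  | 0 => LinearMap.id
  | k + 1 => (LinearMap.mulLeft R f ∘ₗ derivative +
      LinearMap.mulLeft R (C ((c - k : ℕ) : R) * derivative f)) ∘ₗ reducedDerivative f c k

theorem reducedDerivative_succ (f : R[X]) (c k : ℕ) (r : R[X]) :
    reducedDerivative f c (k + 1) r = f * derivative (reducedDerivative f c k r) +
      C ((c - k : ℕ) : R) * derivative f * reducedDerivative f c k r := by
  simp [reducedDerivative, mul_assoc]

theorem iterate_derivative_pow_mul_mul (f r : R[X]) {g : R[X]} (hg : derivative g = 0) {c k : ℕ}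
    (hk : k ≤ c) :
    derivative^[k] (f ^ c * r * g) = f ^ (c - k) * reducedDerivative f c k r * g := by
  induction k with
  | zero => simp [reducedDerivative]
  | succ k ih =>
    obtain ⟨d, rfl⟩ := Nat.exists_eq_add_of_le hk
    rw [iterate_succ_apply', ih (by omega), reducedDerivative_succ, derivative_mul, derivative_mul,
      hg, show k + 1 + d - k = d + 1 by omega, Nat.add_sub_cancel_left, derivative_pow_succ]
    push_cast
    ring

theorem natDegree_reducedDerivative_le {f r : R[X]} {n D : ℕ} (hf : f.natDegree ≤ n + 1)
    (hr : r.natDegree ≤ D) (c k : ℕ) : (reducedDerivative f c k r).natDegree ≤ D + k * n := by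
  induction k with
  | zero => simpa [reducedDerivative] using hr
  | succ k ih =>
    rw [reducedDerivative_succ]
    set u := reducedDerivative f c k r
    have hsucc : (k + 1) * n = k * n + n := Nat.succ_mul k n
    refine natDegree_add_le_of_degree_le ?_ (natDegree_mul_le.trans ?_)
    · by_cases hu : u.natDegree = 0
      · rw [derivative_of_natDegree_zero hu]
        simp
      · have hu' := natDegree_derivative_le u
        exact natDegree_mul_le.trans (by omega)
    · have hC := natDegree_C_mul_le ((c - k : ℕ) : R) (derivative f)
      have hf' := natDegree_derivative_le f
      omega

end ReducedDerivative

section Digits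

variable {K : Type*} [Field K] {p J : ℕ}

/-- The polynomial `∑ r_j X ^ (p j)`, with digits `r_j` in base `X ^ p`. -/
noncomputable def ofDigits (p : ℕ) (r : Fin J → K[X]) : K[X] :=
  ∑ j, r j * X ^ (p * j)

theorem ofDigits_succ (r : Fin (J + 1) → K[X]) :
    ofDigits p r = r 0 + X ^ p * ofDigits p fun j => r j.succ := by
  simp only [ofDigits, Fin.sum_univ_succ, Finset.mul_sum, Fin.val_zero, mul_zero, pow_zero,
    mul_one, Fin.val_succ]
  congr 1
  exact Finset.sum_congr rfl fun j _ => by ring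

theorem natDegree_ofDigits_le {r : Fin J → K[X]} {D : ℕ} (hr : ∀ j, (r j).natDegree ≤ D) :
    (ofDigits p r).natDegree ≤ D + p * (J - 1) :=
  natDegree_sum_le_of_forall_le _ _ fun j _ => by
    have hj : p * j ≤ p * (J - 1) := Nat.mul_le_mul_left p (Nat.le_sub_one_of_lt j.2)
    have hrj := hr j
    refine natDegree_mul_le.trans ?_
    rw [natDegree_X_pow]
    omega

variable [Fact p.Prime] [CharP K p]

theorem X_pow_dvd_pow_sub_C (f : K[X]) : X ^ p ∣ f ^ p - C (f.eval 0 ^ p) := by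
  rw [C_pow, ← sub_pow_char]
  exact pow_dvd_pow_of_dvd (X_dvd_iff.2 (by simp [coeff_zero_eq_eval_zero])) p

theorem sq_mul_eq_of_add_X_pow_mul {f r s A B : K[X]} {D m : ℕ} (hf : f.natDegree ≤ m)
    (hD : 2 * D + m < p) (hr : r.natDegree ≤ D) (hs : s.natDegree ≤ D)
    (h : (r + X ^ p * A) ^ 2 * f = f ^ p * (s + X ^ p * B) ^ 2) :
    r ^ 2 * f = C (f.eval 0 ^ p) * s ^ 2 := by
  obtain ⟨g, hg⟩ := X_pow_dvd_pow_sub_C (p := p) f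
  have hdvd : X ^ p ∣ r ^ 2 * f - C (f.eval 0 ^ p) * s ^ 2 :=
    ⟨g * (s + X ^ p * B) ^ 2 + C (f.eval 0 ^ p) * (2 * s * B + X ^ p * B ^ 2) -
      (2 * r * A + X ^ p * A ^ 2) * f, by linear_combination h + (s + X ^ p * B) ^ 2 * hg⟩
  refine sub_eq_zero.1 (eq_zero_of_dvd_of_natDegree_lt hdvd ?_)
  have hr2 := natDegree_pow_le_of_le 2 hr
  have hs2 := natDegree_pow_le_of_le 2 hs
  rw [natDegree_X_pow]
  refine ((natDegree_sub_le _ _).trans (max_le ?_ ?_)).trans_lt hD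
  · exact natDegree_mul_le.trans (by omega)
  · exact (natDegree_C_mul_le _ _).trans (by omega)

theorem digits_eq_zero_of_sq_mul_eq {f : K[X]} {a : K} {m D : ℕ} (hf : f.natDegree ≤ m)
    (h0 : f.eval 0 ≠ 0) (ha : f.rootMultiplicity a = 1) (hD : 2 * D + m < p) {r s : Fin J → K[X]}
    (hr : ∀ j, (r j).natDegree ≤ D) (hs : ∀ j, (s j).natDegree ≤ D)
    (h : ofDigits p r ^ 2 * f = f ^ p * ofDigits p s ^ 2) : r = 0 ∧ s = 0 := by
  induction J with
  | zero => exact ⟨Subsingleton.elim _ _, Subsingleton.elim _ _⟩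
  | succ J ih =>
    rw [ofDigits_succ, ofDigits_succ] at h
    obtain ⟨hr0, hs0⟩ := eq_zero_of_sq_mul_eq_C_mul_sq (pow_ne_zero p h0) ha
      (sq_mul_eq_of_add_X_pow_mul hf hD (hr 0) (hs 0) h)
    have hX : (X ^ p : K[X]) ^ 2 ≠ 0 := pow_ne_zero _ (pow_ne_zero _ X_ne_zero)
    obtain ⟨hrs, hss⟩ := ih (fun j => hr j.succ) (fun j => hs j.succ)
      (mul_left_cancel₀ hX (by rw [hr0, hs0] at h; linear_combination h))
    exact ⟨funext (Fin.cases hr0 (congrFun hrs)), funext (Fin.cases hs0 (congrFun hss))⟩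

end Digits

section Stepanov

variable {p : ℕ} [Fact p.Prime] {f : (ZMod p)[X]} {ε a : ZMod p} {n M J D h : ℕ}

/-- Where `f ^ h` takes the value `ε` and `X ^ p = X`, this is the `k`-th derivative of the
auxiliary polynomial `f ^ M * (ofDigits p r + f ^ h * ofDigits p s)` up to a power of `f`. -/
noncomputable def substitutedDerivative (f : (ZMod p)[X]) (ε : ZMod p) (M h k : ℕ) :
    (Fin J → (ZMod p)[X]) × (Fin J → (ZMod p)[X]) →ₗ[ZMod p] (ZMod p)[X] where
  toFun v := ∑ j : Fin J, (reducedDerivative f M k (v.1 j) +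
    C ε * reducedDerivative f (M + h) k (v.2 j)) * X ^ (j : ℕ)
  map_add' v w := by
    simp only [← Finset.sum_add_distrib, Prod.fst_add, Prod.snd_add, Pi.add_apply, map_add]
    exact Finset.sum_congr rfl fun j _ => by ring
  map_smul' c v := by
    simp only [Prod.smul_fst, Prod.smul_snd, Pi.smul_apply, map_smul, RingHom.id_apply,
      Finset.smul_sum]
    exact Finset.sum_congr rfl fun j _ => by
      simp only [smul_eq_C_mul]
      ring

theorem substitutedDerivative_apply (f : (ZMod p)[X]) (ε : ZMod p) (M h k : ℕ)
    (r s : Fin J → (ZMod p)[X]) :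
    substitutedDerivative f ε M h k (r, s) = ∑ j : Fin J, (reducedDerivative f M k (r j) +
      C ε * reducedDerivative f (M + h) k (s j)) * X ^ (j : ℕ) :=
  rfl

theorem natDegree_substitutedDerivative_lt (hf : f.natDegree ≤ n + 1) (hJ : 0 < J) (ε : ZMod p)
    (M h k : ℕ) {r s : Fin J → (ZMod p)[X]} (hr : ∀ j, (r j).natDegree ≤ D)
    (hs : ∀ j, (s j).natDegree ≤ D) :
    (substitutedDerivative f ε M h k (r, s)).natDegree < D + J + k * n := by
  rw [substitutedDerivative_apply]
  refine (natDegree_sum_le_of_forall_le (n := D + k * n + (J - 1)) _ _ fun j _ => ?_).trans_lt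
    (by omega)
  have hadd := natDegree_add_le_of_degree_le (natDegree_reducedDerivative_le hf (hr j) M k)
    ((natDegree_C_mul_le ε _).trans (natDegree_reducedDerivative_le hf (hs j) (M + h) k))
  have hj := j.2
  refine natDegree_mul_le.trans ?_
  rw [natDegree_X_pow]
  omega

/-- By dimension counting: the conditions imposed number fewer than the coefficients. -/
theorem exists_substitutedDerivative_eq_zero (hf : f.natDegree ≤ n + 1) (hJ : 0 < J)
    (hdim : ∑ k ∈ Finset.range M, (D + J + k * n) < 2 * (J * (D + 1))) (ε : ZMod p) (h : ℕ) :
    ∃ r s : Fin J → (ZMod p)[X], (∀ j, (r j).natDegree ≤ D) ∧ (∀ j, (s j).natDegree ≤ D) ∧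
      ¬(r = 0 ∧ s = 0) ∧ ∀ k < M, substitutedDerivative f ε M h k (r, s) = 0 := by
  let W := degreeLT (ZMod p) (D + 1)
  have hfinite : Module.Finite (ZMod p) W := .of_basis (degreeLT.basis (ZMod p) (D + 1))
  have hdeg (u : W) : (u : (ZMod p)[X]).natDegree ≤ D :=
    natDegree_le_of_degree_le (mem_degreeLE.1 (degreeLT_succ_eq_degreeLE (R := ZMod p) ▸ u.2))
  let ι : (Fin J → W) →ₗ[ZMod p] Fin J → (ZMod p)[X] := W.subtype.compLeft (Fin J)
  have hι : Injective ι := W.subtype_injective.comp_left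
  obtain ⟨v, hv0, hv⟩ := exists_ne_zero_forall_apply_eq_zero
    (fun k : Fin M => substitutedDerivative f ε M h k ∘ₗ ι.prodMap ι) (fun k => D + J + k * n)
    (fun k v => natDegree_substitutedDerivative_lt hf hJ ε M h k (fun _ => hdeg _) fun _ => hdeg _)
    (by
      rw [Fin.sum_univ_eq_sum_range fun k => D + J + k * n]
      simpa [W, Module.finrank_prod, Module.finrank_pi_fintype,
        Module.finrank_eq_card_basis (degreeLT.basis (ZMod p) _), two_mul] using hdim)
  refine ⟨ι v.1, ι v.2, fun _ => hdeg _, fun _ => hdeg _, ?_, fun k hk => hv ⟨k, hk⟩⟩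
  rintro ⟨hr, hs⟩
  exact hv0 (Prod.ext (hι (hr.trans ι.map_zero.symm)) (hι (hs.trans ι.map_zero.symm)))

/-- The auxiliary polynomial of Stepanov's method. -/
noncomputable def stepanovPolynomial (f : (ZMod p)[X]) (M h : ℕ) (r s : Fin J → (ZMod p)[X]) :
    (ZMod p)[X] :=
  f ^ M * (ofDigits p r + f ^ h * ofDigits p s)

variable {r s : Fin J → (ZMod p)[X]}

theorem stepanovPolynomial_ne_zero (hph : p = 2 * h + 1) (hf : f.natDegree ≤ n + 1)
    (h0 : f.eval 0 ≠ 0) (ha : f.rootMultiplicity a = 1) (hD : 2 * D + (n + 1) < p) (M : ℕ)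
    (hr : ∀ j, (r j).natDegree ≤ D) (hs : ∀ j, (s j).natDegree ≤ D) (hrs : ¬(r = 0 ∧ s = 0)) :
    stepanovPolynomial f M h r s ≠ 0 := by
  have hf0 : f ≠ 0 := by
    rintro rfl
    simp at h0
  refine mul_ne_zero (pow_ne_zero M hf0) fun hsum => hrs ?_
  have hpow : f ^ p = (f ^ h) ^ 2 * f := by
    rw [← pow_mul, ← pow_succ, mul_comm h, ← hph]
  refine digits_eq_zero_of_sq_mul_eq hf h0 ha hD hr hs ?_
  rw [eq_neg_of_add_eq_zero_left hsum, hpow]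
  ring

theorem natDegree_stepanovPolynomial_le (hf : f.natDegree ≤ n + 1) (M h : ℕ)
    (hr : ∀ j, (r j).natDegree ≤ D) (hs : ∀ j, (s j).natDegree ≤ D) :
    (stepanovPolynomial f M h r s).natDegree ≤ (n + 1) * (M + h) + D + p * (J - 1) := by
  have hA := natDegree_ofDigits_le (p := p) hr
  have hB := natDegree_ofDigits_le (p := p) hs
  have hM := natDegree_pow_le_of_le M hf
  have hh := natDegree_pow_le_of_le h hf
  have hadd := natDegree_add_le_of_degree_le (n := h * (n + 1) + (D + p * (J - 1)))
    (hA.trans (Nat.le_add_left _ _)) (natDegree_mul_le.trans (add_le_add hh hB))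
  have hsplit : (n + 1) * (M + h) = M * (n + 1) + h * (n + 1) := by ring
  exact natDegree_mul_le.trans (by omega)

theorem iterate_derivative_stepanovPolynomial {k : ℕ} (hk : k ≤ M) :
    derivative^[k] (stepanovPolynomial f M h r s) = f ^ (M - k) * ∑ j : Fin J,
      (reducedDerivative f M k (r j) + f ^ h * reducedDerivative f (M + h) k (s j)) *
        X ^ (p * j) := by
  have hX (j : Fin J) : derivative (X ^ (p * j) : (ZMod p)[X]) = 0 := by simp [derivative_X_pow]
  have hsum : stepanovPolynomial f M h r s =
      ∑ j : Fin J, (f ^ M * r j * X ^ (p * j) + f ^ (M + h) * s j * X ^ (p * j)) := by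
    rw [stepanovPolynomial, ofDigits, ofDigits, Finset.mul_sum, ← Finset.sum_add_distrib,
      Finset.mul_sum]
    exact Finset.sum_congr rfl fun j _ => by ring
  rw [hsum, iterate_derivative_sum, Finset.mul_sum]
  refine Finset.sum_congr rfl fun j _ => ?_
  rw [iterate_map_add, iterate_derivative_pow_mul_mul f _ (hX j) hk,
    iterate_derivative_pow_mul_mul f _ (hX j) (by omega), Nat.sub_add_comm hk]
  ring

theorem le_rootMultiplicity_stepanovPolynomial (hM : M < p)
    (hne : stepanovPolynomial f M h r s ≠ 0)
    (hzero : ∀ k < M, substitutedDerivative f ε M h k (r, s) = 0) {x : ZMod p}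
    (hx : f.eval x ^ h = ε) : M ≤ (stepanovPolynomial f M h r s).rootMultiplicity x := by
  rcases M with _ | M
  · exact Nat.zero_le _
  refine lt_rootMultiplicity_of_isRoot_iterate_derivative_of_mem_nonZeroDivisors hne
    (fun k hk => ?_) (mem_nonZeroDivisors_of_ne_zero fun hfac => ?_)
  · have heval := congrArg (Polynomial.eval x) (hzero k (by omega))
    rw [substitutedDerivative_apply] at heval
    rw [IsRoot.def, iterate_derivative_stepanovPolynomial (by omega), eval_mul]
    simp only [eval_finsetSum, eval_mul, eval_add, eval_pow, eval_X, eval_C, eval_zero, hx, pow_mul,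
      ZMod.pow_card] at heval ⊢
    rw [heval, mul_zero]
  · rw [ZMod.natCast_eq_zero_iff, (Fact.out : p.Prime).dvd_factorial] at hfac
    omega

theorem mul_card_le_of_forall_eval_pow_eq (hph : p = 2 * h + 1) (hf : f.natDegree ≤ n + 1)
    (h0 : f.eval 0 ≠ 0) (ha : f.rootMultiplicity a = 1) (hD : 2 * D + (n + 1) < p) (hM : M < p)
    (hJ : 0 < J) (hdim : ∑ k ∈ Finset.range M, (D + J + k * n) < 2 * (J * (D + 1)))
    {N : Finset (ZMod p)} (hN : ∀ x ∈ N, f.eval x ^ h = ε) :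
    M * N.card ≤ (n + 1) * (M + h) + D + p * (J - 1) := by
  obtain ⟨r, s, hr, hs, hrs, hzero⟩ := exists_substitutedDerivative_eq_zero hf hJ hdim ε h
  have hne := stepanovPolynomial_ne_zero hph hf h0 ha hD M hr hs hrs
  exact (mul_card_le_natDegree_of_le_rootMultiplicity fun x hx =>
    le_rootMultiplicity_stepanovPolynomial hM hne hzero (hN x hx)).trans
      (natDegree_stepanovPolynomial_le hf M h hr hs)

end Stepanov

/-! ### Prescribed values of the quadratic character -/

section CharacterSum

section Counting

variable {F ι : Type*} [Field F] [Fintype F] [DecidableEq F] [Fintype ι]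

theorem sum_quadraticChar_eq_card_sub_card (g : ι → F) :
    ∑ i, quadraticChar F (g i) =
      (Finset.univ.filter fun i => quadraticChar F (g i) = 1).card -
        (Finset.univ.filter fun i => quadraticChar F (g i) = -1).card := by
  have hpoint (a : F) : quadraticChar F a =
      (if quadraticChar F a = 1 then 1 else 0) - if quadraticChar F a = -1 then 1 else 0 := by
    by_cases ha : a = 0
    · simp [ha]
    · rcases quadraticChar_dichotomy ha with h | h <;> simp [h]
  simp only [Finset.card_filter, Nat.cast_sum, Nat.cast_ite, Nat.cast_one, Nat.cast_zero,
    ← Finset.sum_sub_distrib, ← hpoint]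

theorem card_eq_card_quadraticChar_add (g : ι → F) :
    Fintype.card ι =
      (Finset.univ.filter fun i => quadraticChar F (g i) = 1).card +
        (Finset.univ.filter fun i => quadraticChar F (g i) = -1).card +
          (Finset.univ.filter fun i => g i = 0).card := by
  have hpoint (a : F) : (if quadraticChar F a = 1 then 1 else 0) +
      (if quadraticChar F a = -1 then 1 else 0) + (if a = 0 then 1 else 0) = 1 := by
    by_cases ha : a = 0
    · simp [ha]
    · rcases quadraticChar_dichotomy ha with h | h <;> simp [h, ha]
  simp only [Finset.card_filter, ← Finset.sum_add_distrib, hpoint]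
  simp

/-- The product is `2 ^ card ι` where `χ (x + β i) = ε i` for all `i`, it vanishes where some
`χ (x + β i)` is `-ε i`, and only the points `x = -β i` remain. -/
theorem sum_prod_one_add_mul_quadraticChar_le {β : ι → F} {ε : ι → ℤˣ}
    (hβ : ∀ x, ∃ i, quadraticChar F (x + β i) ≠ ε i) :
    ∑ x, ∏ i, (1 + ε i * quadraticChar F (x + β i)) ≤
      Fintype.card ι * 2 ^ Fintype.card ι := by
  have hfactor (x : F) (i : ι) : 0 ≤ 1 + ε i * quadraticChar F (x + β i) ∧
      1 + ε i * quadraticChar F (x + β i) ≤ 2 := by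
    rcases Int.units_eq_one_or (ε i) with hε | hε <;>
      rcases quadraticChar_isQuadratic F (x + β i) with hχ | hχ | hχ <;> simp [hε, hχ]
  have hprod (x : F) : ∏ i, (1 + ε i * quadraticChar F (x + β i)) ≤
      if x ∈ Finset.univ.image (-β) then 2 ^ Fintype.card ι else 0 := by
    split_ifs with hx
    · simpa using Finset.prod_le_prod (s := Finset.univ)
        (fun i _ => (hfactor x i).1) (fun i _ => (hfactor x i).2)
    · obtain ⟨i, hi⟩ := hβ x
      refine (Finset.prod_eq_zero (Finset.mem_univ i) ?_).le
      have hne : x + β i ≠ 0 := fun h0 =>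
        hx (Finset.mem_image.2 ⟨i, Finset.mem_univ i, (eq_neg_of_add_eq_zero_left h0).symm⟩)
      rcases Int.units_eq_one_or (ε i) with hε | hε <;>
        rcases quadraticChar_dichotomy hne with hχ | hχ <;> simp_all
  calc ∑ x, ∏ i, (1 + ε i * quadraticChar F (x + β i))
      ≤ (Finset.univ.image (-β)).card * 2 ^ Fintype.card ι := by
        refine (Finset.sum_le_sum fun x _ => hprod x).trans_eq ?_
        rw [Finset.sum_ite_mem, Finset.univ_inter, Finset.sum_const, nsmul_eq_mul]
    _ ≤ Fintype.card ι * 2 ^ Fintype.card ι := by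
        gcongr
        exact Finset.card_image_le

theorem sum_prod_one_add_mul_quadraticChar (β : ι → F) (ε : ι → ℤˣ) :
    ∑ x, ∏ i, (1 + ε i * quadraticChar F (x + β i)) =
      ∑ T : Finset ι, (∏ i ∈ T, (ε i : ℤ)) * ∑ x, quadraticChar F (∏ i ∈ T, (x + β i)) := by
  simp only [Finset.prod_one_add, Finset.powerset_univ, Finset.prod_mul_distrib, map_prod,
    Finset.mul_sum]
  exact Finset.sum_comm

theorem exists_forall_quadraticChar_add_eq_of_mul_abs_sum_le {β : ι → F} {k B : ℤ} (hk : 0 ≤ k)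
    (hB : ∀ T : Finset ι, T.Nonempty →
      k * |∑ x, quadraticChar F (∏ i ∈ T, (x + β i))| ≤ B)
    (hlt : (2 ^ Fintype.card ι - 1) * B + k * (Fintype.card ι * 2 ^ Fintype.card ι) <
      k * Fintype.card F) (ε : ι → ℤˣ) :
    ∃ x, ∀ i, quadraticChar F (x + β i) = ε i := by
  classical
  by_contra! hβ
  have hterm : ∀ T ∈ (Finset.univ : Finset (Finset ι)).erase ∅, -B ≤
      k * ((∏ i ∈ T, (ε i : ℤ)) * ∑ x, quadraticChar F (∏ i ∈ T, (x + β i))) := fun T hT => by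
    have hε : |∏ i ∈ T, (ε i : ℤ)| = 1 := by
      rw [← Units.coe_prod]
      exact Int.isUnit_iff_abs_eq.1 (Units.isUnit _)
    refine neg_le_of_abs_le ?_
    rw [abs_mul, abs_mul, hε, one_mul, abs_of_nonneg hk]
    exact hB T (Finset.nonempty_iff_ne_empty.2 (Finset.ne_of_mem_erase hT))
  have hlow := Finset.card_nsmul_le_sum _ _ _ hterm
  rw [← Finset.mul_sum, Finset.card_erase_of_mem (Finset.mem_univ _), Finset.card_univ,
    Fintype.card_finset, nsmul_eq_mul, Nat.cast_sub Nat.one_le_two_pow] at hlow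
  have hup := sum_prod_one_add_mul_quadraticChar_le hβ
  rw [sum_prod_one_add_mul_quadraticChar, ← Finset.add_sum_erase _ _ (Finset.mem_univ ∅)] at hup
  have hmain := mul_le_mul_of_nonneg_left hup hk
  simp only [Finset.prod_empty, map_one, Finset.sum_const, Finset.card_univ, nsmul_eq_mul, mul_one,
    one_mul] at hmain
  push_cast at hlow
  linarith

end Counting

variable {p : ℕ} [Fact p.Prime] {f : (ZMod p)[X]} {a ε : ZMod p} {m μ h : ℕ}

/-- Stepanov's method with parameters `M = 2 μ`, `J = μ + 3` and `D = h - 4`. -/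
theorem two_mul_mul_card_le_of_forall_eval_pow_eq (hph : p = 2 * h + 1) (hm : 5 ≤ m) (hm8 : m ≤ 8)
    (hμ : 1 ≤ μ) (hbig : 2 * m * μ ^ 2 + 18 < 6 * h) (hf : f.natDegree ≤ m) (h0 : f.eval 0 ≠ 0)
    (ha : f.rootMultiplicity a = 1) {N : Finset (ZMod p)} (hN : ∀ x ∈ N, f.eval x ^ h = ε) :
    2 * μ * N.card ≤ m * (2 * μ + h) + h + p * (μ + 2) := by
  have hμ2 : μ ≤ μ ^ 2 := Nat.le_self_pow two_ne_zero μ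
  have hmμ : 10 * μ ^ 2 ≤ 2 * m * μ ^ 2 := Nat.mul_le_mul_right _ (by omega)
  obtain ⟨n, rfl⟩ : ∃ n, m = n + 1 := ⟨m - 1, by omega⟩
  obtain ⟨D, rfl⟩ : ∃ D, h = D + 4 := ⟨h - 4, by omega⟩
  have hgauss : ∑ k ∈ Finset.range (2 * μ), k = μ * (2 * μ - 1) := by
    rw [Finset.sum_range_id, mul_assoc, Nat.mul_div_cancel_left _ two_pos]
  have hdim : ∑ k ∈ Finset.range (2 * μ), (D + (μ + 3) + k * n) < 2 * ((μ + 3) * (D + 1)) := by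
    rw [Finset.sum_add_distrib, ← Finset.sum_mul, hgauss, Finset.sum_const, Finset.card_range,
      smul_eq_mul]
    obtain ⟨ν, rfl⟩ := Nat.exists_eq_add_of_le' hμ
    rw [show 2 * (ν + 1) - 1 = 2 * ν + 1 by omega]
    nlinarith
  have hcard : 2 * μ * N.card ≤ (n + 1) * (2 * μ + (D + 4)) + D + p * (μ + 2) :=
    mul_card_le_of_forall_eval_pow_eq hph hf h0 ha (by omega) (by omega) (Nat.succ_pos _) hdim hN
  omega

theorem two_mul_abs_sum_quadraticChar_eval_le (hph : p = 2 * h + 1) (hm : 5 ≤ m) (hm8 : m ≤ 8)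
    (hμ : 1 ≤ μ) (hbig : 2 * m * μ ^ 2 + 18 < 6 * h) (hf : f.natDegree ≤ m) (h0 : f.eval 0 ≠ 0)
    (ha : f.rootMultiplicity a = 1) :
    2 * μ * |∑ x, quadraticChar (ZMod p) (f.eval x)| ≤ 6 * m * μ + (m + 5) * p := by
  have hp2 : ringChar (ZMod p) ≠ 2 := by
    rw [ZMod.ringChar_zmod_n]
    omega
  have hpow (x : ZMod p) : ((quadraticChar (ZMod p) x : ℤ) : ZMod p) = x ^ h := by
    rw [quadraticChar_eq_pow_of_char_ne_two' hp2, ZMod.card]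
    congr 1
    omega
  have hcard (e : ℤ) : 2 * (μ : ℤ) *
      (Finset.univ.filter fun x => quadraticChar (ZMod p) (f.eval x) = e).card ≤
        m * (2 * μ + h) + h + p * (μ + 2) := by
    exact_mod_cast two_mul_mul_card_le_of_forall_eval_pow_eq (ε := e) hph hm hm8 hμ hbig hf h0 ha
      fun x hx => by rw [← hpow, (Finset.mem_filter.1 hx).2]
  have hf0 : f ≠ 0 := fun hf0 => h0 (by rw [hf0, Polynomial.eval_zero])
  have hzero : (Finset.univ.filter fun x => f.eval x = 0).card ≤ m :=
    (Finset.card_le_card fun x hx => Multiset.mem_toFinset.2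
      ((mem_roots hf0).2 (Finset.mem_filter.1 hx).2)).trans
        ((Multiset.toFinset_card_le _).trans ((card_roots' f).trans hf))
  have hpos := hcard 1
  have hneg := hcard (-1)
  have htotal := card_eq_card_quadraticChar_add fun x => f.eval x
  rw [sum_quadraticChar_eq_card_sub_card]
  rw [ZMod.card] at htotal
  generalize (Finset.univ.filter fun x => quadraticChar (ZMod p) (f.eval x) = 1).card = P at *
  generalize (Finset.univ.filter fun x => quadraticChar (ZMod p) (f.eval x) = -1).card = Q at *
  generalize (Finset.univ.filter fun x => f.eval x = 0).card = Z at *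
  zify at hzero hph htotal hm8 hm hμ
  have hZμ : (μ : ℤ) * Z ≤ μ * m := by gcongr
  have hpμ : (p : ℤ) * μ = (P + Q + Z) * μ := by rw [htotal]
  have hmp : (m : ℤ) * p = m * (2 * h + 1) := by rw [hph]
  rcases abs_cases ((P : ℤ) - Q) with ⟨hPQ, -⟩ | ⟨hPQ, -⟩ <;> rw [hPQ] <;> linarith

end CharacterSum

section Pattern

variable {p : ℕ} [Fact p.Prime] {ι : Type*} [Fintype ι] {β : ι → ZMod p} {μ h : ℕ}

theorem two_mul_abs_sum_quadraticChar_prod_add_le (hβ : Injective β) (hβ0 : ∀ i, β i ≠ 0)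
    (hph : p = 2 * h + 1) (hι : 5 ≤ Fintype.card ι) (hι8 : Fintype.card ι ≤ 8) (hμ : 1 ≤ μ)
    (hbig : 2 * Fintype.card ι * μ ^ 2 + 18 < 6 * h) {T : Finset ι} (hT : T.Nonempty) :
    2 * μ * |∑ x, quadraticChar (ZMod p) (∏ i ∈ T, (x + β i))| ≤
      6 * Fintype.card ι * μ + (Fintype.card ι + 5) * p := by
  obtain ⟨i₀, hi₀⟩ := hT
  set f : (ZMod p)[X] := ∏ i ∈ T, (X - C (-β i))
  have heval (x : ZMod p) : f.eval x = ∏ i ∈ T, (x + β i) := by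
    simp only [f, eval_prod, eval_sub, eval_X, eval_C, sub_neg_eq_add]
  have hdeg : f.natDegree ≤ Fintype.card ι := by
    rw [natDegree_prod_of_monic _ _ fun i _ => monic_X_sub_C _]
    simpa using T.card_le_univ
  have h0 : f.eval 0 ≠ 0 := by
    rw [heval, Finset.prod_ne_zero_iff]
    exact fun i _ => by simpa using hβ0 i
  have hroots : f.roots = T.val.map (-β) := by
    rw [← roots_multiset_prod_X_sub_C (T.val.map (-β)), Multiset.map_map]
    rfl
  have hsimple : f.rootMultiplicity (-β i₀) = 1 := by
    rw [← count_roots, hroots]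
    exact Multiset.count_eq_one_of_mem (T.nodup.map (neg_injective.comp hβ))
      (Multiset.mem_map_of_mem (-β) hi₀)
  simpa only [heval] using
    two_mul_abs_sum_quadraticChar_eval_le hph hι hι8 hμ hbig hdeg h0 hsimple

/-- A translation ensures that none of the shifts is `0`, as Stepanov's method requires. -/
theorem exists_forall_quadraticChar_add_eq (hβ : Injective β)
    (hph : p = 2 * h + 1) (hι : 5 ≤ Fintype.card ι) (hι8 : Fintype.card ι ≤ 8) (hμ : 1 ≤ μ)
    (hbig : 2 * Fintype.card ι * μ ^ 2 + 18 < 6 * h)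
    (hlt : (2 ^ Fintype.card ι - 1) * (6 * Fintype.card ι * μ + (Fintype.card ι + 5) * p) +
      2 * μ * (Fintype.card ι * 2 ^ Fintype.card ι) < 2 * μ * (p : ℤ)) (ε : ι → ℤˣ) :
    ∃ x, ∀ i, quadraticChar (ZMod p) (x + β i) = ε i := by
  obtain ⟨c, hc⟩ : ∃ c, c ∉ Finset.univ.image β := by
    by_contra! hall
    have hle : Fintype.card (ZMod p) ≤ Fintype.card ι :=
      (Finset.card_le_card fun x _ => hall x).trans Finset.card_image_le
    rw [ZMod.card] at hle
    have : 0 ≤ 2 * Fintype.card ι * μ ^ 2 := Nat.zero_le _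
    omega
  have hne (i : ι) : β i - c ≠ 0 := fun hi =>
    hc (Finset.mem_image.2 ⟨i, Finset.mem_univ i, sub_eq_zero.1 hi⟩)
  obtain ⟨x, hx⟩ := exists_forall_quadraticChar_add_eq_of_mul_abs_sum_le (by positivity)
    (fun T => two_mul_abs_sum_quadraticChar_prod_add_le
      ((sub_left_injective (b := c)).comp hβ) hne hph hι hι8 hμ hbig) (by rwa [ZMod.card]) ε
  refine ⟨x - c, fun i => ?_⟩
  rw [← hx i, sub_add_eq_add_sub, add_sub_assoc]
  rfl

theorem exists_forall_quadraticChar_add_eq_of_card_eq_seven (hodd : p % 2 = 1) (hp : 2750000 ≤ p)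
    (hι : Fintype.card ι = 7) (hβ : Injective β) (ε : ι → ℤˣ) :
    ∃ x, ∀ i, quadraticChar (ZMod p) (x + β i) = ε i := by
  refine exists_forall_quadraticChar_add_eq (h := p / 2) (μ := 765) hβ
    (by omega) (by omega) (by omega) (by norm_num) ?_ ?_ ε <;> rw [hι] <;> norm_num <;> omega

theorem exists_forall_quadraticChar_add_eq_of_card_eq_eight (hodd : p % 2 = 1) (hp : 15000000 ≤ p)
    (hι : Fintype.card ι = 8) (hβ : Injective β) (ε : ι → ℤˣ) :
    ∃ x, ∀ i, quadraticChar (ZMod p) (x + β i) = ε i := by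
  refine exists_forall_quadraticChar_add_eq (h := p / 2) (μ := 1665) hβ
    (by omega) (by omega) (by omega) (by norm_num) ?_ ?_ ε <;> rw [hι] <;> norm_num <;> omega

end Pattern

end CharacterSums

/-! ### Seeds over the golden ratio and over a cube root of unity -/

section Roots

variable {F : Type*} [Field F] {χ : MulChar F ℤ}

theorem IsOddQuadratic.two_ne_zero (h : IsOddQuadratic χ) : (2 : F) ≠ 0 := fun h2 => by
  have hneg : (-1 : F) = 1 := by linear_combination -h2
  simpa [hneg] using h.neg_one

theorem IsOddQuadratic.exists_mul_self_eq_add_one (h : IsOddQuadratic χ) (h5 : IsSquare (5 : F)) :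
    ∃ φ : F, φ * φ = φ + 1 ∧ χ φ = -1 := by
  have : NeZero (2 : F) := ⟨h.two_ne_zero⟩
  obtain ⟨s, hs⟩ := h5
  obtain ⟨φ, hφ⟩ := exists_quadratic_eq_zero (a := (1 : F)) (b := -1) (c := -1) one_ne_zero
    ⟨s, by rw [← hs, discrim]; norm_num⟩
  have hconj : φ * (1 - φ) = -1 := by linear_combination -hφ
  have hχ := congrArg χ hconj
  rw [map_mul, h.neg_one] at hχ
  have hφ0 : φ ≠ 0 := left_ne_zero_of_mul (hconj.trans_ne (neg_ne_zero.2 one_ne_zero))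
  rcases h.eq_one_or_neg_one hφ0 with hpos | hneg
  · exact ⟨1 - φ, by linear_combination hφ, by rwa [hpos, one_mul] at hχ⟩
  · exact ⟨φ, by linear_combination hφ, hneg⟩

theorem IsOddQuadratic.exists_mul_self_eq_neg_sub_one (h : IsOddQuadratic χ)
    (hsq : IsSquare (-3 : F)) (h3 : χ 3 = -1) :
    ∃ ω : F, ω * ω = -ω - 1 ∧ χ (1 - ω) = 1 := by
  have : NeZero (2 : F) := ⟨h.two_ne_zero⟩
  obtain ⟨s, hs⟩ := hsq
  obtain ⟨ω, hω⟩ := exists_quadratic_eq_zero (a := (1 : F)) (b := 1) (c := 1) one_ne_zero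
    ⟨s, by rw [← hs, discrim]; norm_num⟩
  have hconj : (1 - ω) * (1 - (-1 - ω)) = 3 := by linear_combination -hω
  have hχ := congrArg χ hconj
  rw [map_mul, h3] at hχ
  have hω1 : 1 - ω ≠ 0 := left_ne_zero_of_mul
    (hconj.trans_ne (ne_zero_of_apply_ne_zero (χ := χ) (by rw [h3]; decide)))
  rcases h.eq_one_or_neg_one hω1 with hpos | hneg
  · exact ⟨ω, by linear_combination hω, hpos⟩
  · exact ⟨-1 - ω, by linear_combination hω, by rwa [hneg, neg_one_mul, neg_inj] at hχ⟩

theorem IsOddQuadratic.apply_eq_one_of_mul_self_eq (h : IsOddQuadratic χ) {ω : F}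
    (hω : ω * ω = -ω - 1) : χ ω = 1 := by
  have hω0 : ω ≠ 0 := by
    rintro rfl
    simp at hω
  rw [show ω = ω * ω * (ω * ω) by linear_combination (ω - ω * ω) * hω]
  exact h.apply_mul_self (mul_ne_zero hω0 hω0)

theorem sideCondition_of_eq_one {v u p m : ℤ} (hv : v = 1) (hu : u = -1) :
    SideCondition v u p m := by
  simp [SideCondition, hv, hu]

theorem sideCondition_of_eq_neg_one {v u p m : ℤ} (hu : u = -1) (hp : p = -1) :
    SideCondition v u p m := by
  simp [SideCondition, hu, hp]

theorem isSeed_of_mul_self_eq_add_one (h : IsOddQuadratic χ) {φ s : F} (hφ : φ * φ = φ + 1)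
    (hχφ : χ φ = -1) (h1 : χ (s + 1) = 1) (h2 : χ (s + 2) = 1) (h3 : χ (s + 3) = -1)
    (hφ0 : χ (s + φ) = -1) (hφ1 : χ (s + (1 + φ)) = -1) (hφ2 : χ (s + (2 + φ)) = -1)
    (hφ3 : χ (s + (3 + φ)) = 1) : IsSeed χ ((s + 2) * (φ - 1)) ((s + 2) * φ) 1 := by
  have hχφ' : χ (φ - 1) = -1 := by
    have hχ := congrArg χ (show φ * (φ - 1) = 1 by linear_combination hφ)
    rw [map_mul, map_one, hχφ] at hχ
    linarith
  refine ⟨map_one χ, ⟨?_, ?_, ?_, sideCondition_of_eq_one ?_ ?_⟩,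
    ⟨?_, ?_, ?_, sideCondition_of_eq_neg_one ?_ ?_⟩⟩
  · simp [h2, hχφ']
  · calc _ = χ ((φ - 1) * (s + (2 + φ))) := congrArg χ (by linear_combination -hφ)
      _ = 1 := by simp [hχφ', hφ2]
  · calc _ = χ (-(s + 1)) := congrArg χ (by ring)
      _ = -1 := by rw [h.neg, h1]
  · calc _ = χ (-((s + 2) * (s + 3))) := congrArg χ (by linear_combination -(s + 2) ^ 2 * hφ)
      _ = 1 := by simp [h.neg, h2, h3]
  · calc _ = χ ((s + 2) * (φ - 1) * (s + (3 + φ))) :=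
          congrArg χ (by linear_combination -(s + 2) * hφ)
      _ = -1 := by simp [h2, hχφ', hφ3]
  · simp [h2, hχφ]
  · calc _ = χ (φ * (s + (1 + φ))) := congrArg χ (by linear_combination -hφ)
      _ = 1 := by simp [hχφ, hφ1]
  · calc _ = χ (s + 3) := congrArg χ (by ring)
      _ = -1 := h3
  · calc _ = χ (-((s + 2) * φ * (s + φ))) := congrArg χ (by linear_combination (s + 2) * hφ)
      _ = -1 := by simp [h.neg, h2, hχφ, hφ0]
  · calc _ = χ ((s + 2) * (φ - 1) * (s + 1)) :=
          congrArg χ (by linear_combination -(s + 2) ^ 2 * hφ)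
      _ = -1 := by simp [h2, hχφ', h1]

theorem isSeed_of_mul_self_eq_neg_sub_one (h : IsOddQuadratic χ) {ω s : F} (hω : ω * ω = -ω - 1)
    (hχω : χ (1 - ω) = 1) (h0 : χ s = -1) (h1 : χ (s + 1) = 1) (h3 : χ (s + 3) = -1)
    (hsub0 : χ (s + -ω) = 1) (hsub1 : χ (s + (1 - ω)) = 1) (hsub1' : χ (s + (-1 - ω)) = 1)
    (hsub2 : χ (s + (-2 - ω)) = -1) (hadd2 : χ (s + (2 + ω)) = 1) :
    IsSeed χ s ((1 - ω) * s) (1 - ω) := by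
  have hχω' : χ ω = 1 := h.apply_eq_one_of_mul_self_eq hω
  refine ⟨hχω, ⟨h0, ?_, ?_, sideCondition_of_eq_one ?_ ?_⟩,
    ⟨?_, ?_, ?_, sideCondition_of_eq_neg_one ?_ ?_⟩⟩
  · rwa [add_comm]
  · calc _ = χ (ω * (s + (-2 - ω))) := congrArg χ (by linear_combination hω)
      _ = -1 := by simp [hχω', hsub2]
  · calc _ = χ (-((1 - ω) * s * (s + -ω))) := congrArg χ (by ring)
      _ = 1 := by simp [h.neg, hχω, h0, hsub0]
  · calc _ = χ (-(ω * s * (s + 3))) := congrArg χ (by linear_combination s * hω)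
      _ = -1 := by simp [h.neg, hχω', h0, h3]
  · simp [hχω, h0]
  · calc _ = χ ((1 - ω) * (s + 1)) := congrArg χ (by ring)
      _ = 1 := by simp [hχω, h1]
  · calc _ = χ (-(ω * (s + (2 + ω)))) := congrArg χ (by linear_combination hω)
      _ = -1 := by simp [h.neg, hχω', hadd2]
  · calc _ = χ ((1 - ω) * ω * s * (s + (-1 - ω))) :=
          congrArg χ (by linear_combination (1 - ω) * s * hω)
      _ = -1 := by simp [hχω, hχω', h0, hsub1']
  · calc _ = χ ((1 - ω) * (ω * ω) * s * (s + -ω)) :=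
          congrArg χ (by linear_combination (1 - ω) * s * (ω - s - 1) * hω)
      _ = -1 := by simp [hχω, hχω', h0, hsub0]

end Roots

section Shifts

variable {p : ℕ}

/-- The norm of `a + b ϑ` when `ϑ ^ 2 = c ϑ + d`. -/
def quadraticNorm (c d a b : ℤ) : ℤ := a ^ 2 + c * a * b - d * b ^ 2

theorem injective_intCast_add_intCast_mul {ι : Type*} {c d : ℤ} {ϑ : ZMod p}
    (hϑ : ϑ * ϑ = c * ϑ + d) {a b : ι → ℤ}
    (hnorm : ∀ i j, i ≠ j → quadraticNorm c d (a i - a j) (b i - b j) ≠ 0 ∧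
      |quadraticNorm c d (a i - a j) (b i - b j)| < p) :
    Injective fun i => (a i : ZMod p) + b i * ϑ := fun i j hij => by
  by_contra hne
  obtain ⟨hne0, hlt⟩ := hnorm i j hne
  refine hne0 (Int.eq_zero_of_abs_lt_dvd ((ZMod.intCast_zmod_eq_zero_iff_dvd _ p).1 ?_) hlt)
  push_cast [quadraticNorm]
  linear_combination ((a i - a j : ZMod p) + c * (b i - b j) - (b i - b j) * ϑ) * hij +
    (b i - b j : ZMod p) ^ 2 * hϑ

variable [Fact p.Prime]

theorem isSquare_of_quadraticChar_eq_one {x : ZMod p} (hx : quadraticChar (ZMod p) x = 1) :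
    IsSquare x :=
  (quadraticChar_one_iff_isSquare (ne_zero_of_apply_ne_zero (by rw [hx]; decide))).1 hx

theorem exists_isSeed_of_quadraticChar_five (h4 : p % 4 = 3) (hp : 2750000 ≤ p)
    (h5 : quadraticChar (ZMod p) 5 = 1) : ∃ x y z, IsSeed (quadraticChar (ZMod p)) x y z := by
  have h : IsOddQuadratic (quadraticChar (ZMod p)) :=
    isOddQuadratic_quadraticChar (by rwa [ZMod.card])
  obtain ⟨φ, hφ, hχφ⟩ := h.exists_mul_self_eq_add_one (isSquare_of_quadraticChar_eq_one h5)
  let a : Fin 7 → ℤ := ![1, 2, 3, 0, 1, 2, 3]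
  let b : Fin 7 → ℤ := ![0, 0, 0, 1, 1, 1, 1]
  have hnorm : ∀ i j, i ≠ j → quadraticNorm 1 1 (a i - a j) (b i - b j) ≠ 0 ∧
      |quadraticNorm 1 1 (a i - a j) (b i - b j)| < 100 := by decide
  have hinj := injective_intCast_add_intCast_mul (p := p) (ϑ := φ) (by simpa using hφ)
    fun i j hij => (hnorm i j hij).imp_right fun hlt => hlt.trans (by omega)
  obtain ⟨s, hs⟩ := exists_forall_quadraticChar_add_eq_of_card_eq_seven (by omega) hp rfl hinj
    ![1, 1, -1, -1, -1, -1, 1]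
  exact ⟨_, _, _, isSeed_of_mul_self_eq_add_one (s := s) h hφ hχφ (by simpa [a, b] using hs 0)
    (by simpa [a, b] using hs 1) (by simpa [a, b] using hs 2) (by simpa [a, b] using hs 3)
    (by simpa [a, b] using hs 4) (by simpa [a, b] using hs 5) (by simpa [a, b] using hs 6)⟩

theorem exists_isSeed_of_quadraticChar_three (h4 : p % 4 = 3) (hp : 15000000 ≤ p)
    (h3 : quadraticChar (ZMod p) 3 = -1) : ∃ x y z, IsSeed (quadraticChar (ZMod p)) x y z := by
  have h : IsOddQuadratic (quadraticChar (ZMod p)) :=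
    isOddQuadratic_quadraticChar (by rwa [ZMod.card])
  have hneg3 : quadraticChar (ZMod p) (-3) = 1 := by rw [h.neg, h3, neg_neg]
  obtain ⟨ω, hω, hχω⟩ :=
    h.exists_mul_self_eq_neg_sub_one (isSquare_of_quadraticChar_eq_one hneg3) h3
  let a : Fin 8 → ℤ := ![0, 1, 3, 0, 1, -1, -2, 2]
  let b : Fin 8 → ℤ := ![0, 0, 0, -1, -1, -1, -1, 1]
  have hnorm : ∀ i j, i ≠ j → quadraticNorm (-1) (-1) (a i - a j) (b i - b j) ≠ 0 ∧
      |quadraticNorm (-1) (-1) (a i - a j) (b i - b j)| < 100 := by decide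
  have hinj := injective_intCast_add_intCast_mul (p := p) (ϑ := ω)
    (by simpa [sub_eq_add_neg] using hω)
    fun i j hij => (hnorm i j hij).imp_right fun hlt => hlt.trans (by omega)
  obtain ⟨s, hs⟩ := exists_forall_quadraticChar_add_eq_of_card_eq_eight (by omega) hp rfl hinj
    ![-1, 1, -1, 1, 1, 1, -1, 1]
  exact ⟨_, _, _, isSeed_of_mul_self_eq_neg_sub_one (s := s) h hω hχω
    (by simpa [a, b] using hs 0) (by simpa [a, b] using hs 1) (by simpa [a, b] using hs 2)
    (by simpa [a, b] using hs 3) (by simpa [a, b, sub_eq_add_neg] using hs 4)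
    (by simpa [a, b, sub_eq_add_neg] using hs 5) (by simpa [a, b, sub_eq_add_neg] using hs 6)
    (by simpa [a, b] using hs 7)⟩

end Shifts

/-! ### Lower bounds for the exceptional primes -/

section Sieve

/-- Euler's criterion for `-n` to have Legendre symbol `a.2` modulo the prime `a.1`. -/
def EulerTest (a : ℕ × ℤ) (n : ℕ) : Prop :=
  (((a.1 - n % a.1) ^ (a.1 / 2) % a.1 : ℕ) : ℤ) = a.2 % a.1

instance (a : ℕ × ℤ) (n : ℕ) : Decidable (EulerTest a n) := by
  unfold EulerTest
  infer_instance

/-- Among the numbers below `B` in the residue class of `a` modulo `m`, those that pass all the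
tests in the list have a divisor in `E`. The class is refined with every test until at most one
number below `B` is left in it. -/
def IsSieved (B : ℕ) (E : List ℕ) : SignTable → ℕ → ℕ → Prop
  | [], m, a => a < B → B ≤ m ∧ ∃ d ∈ E, d ∣ a
  | c :: cs, m, a => ∀ j < min c.1 (B / m + 1),
      EulerTest c (a + m * j) → IsSieved B E cs (m * c.1) (a + m * j)

instance IsSieved.decidable (B : ℕ) (E : List ℕ) :
    ∀ (cs : SignTable) (m a : ℕ), Decidable (IsSieved B E cs m a)
  | [], m, a => inferInstanceAs (Decidable (a < B → B ≤ m ∧ ∃ d ∈ E, d ∣ a))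
  | c :: cs, m, _ =>
    have := IsSieved.decidable B E cs
    inferInstanceAs (Decidable (∀ j < min c.1 (B / m + 1), _ → _))

theorem EulerTest.of_mod_eq {c : ℕ × ℤ} {n n' : ℕ} (hn : EulerTest c n)
    (hnn' : n' % c.1 = n % c.1) : EulerTest c n' := by
  unfold EulerTest at hn ⊢
  rwa [hnn']

theorem IsSieved.exists_dvd {B n : ℕ} {E : List ℕ} (hn : n < B) {cs : SignTable}
    (hcs : ∀ c ∈ cs, 0 < c.1 ∧ EulerTest c n) {m i a : ℕ} (hm : 0 < m) (hi : n = a + m * i)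
    (hs : IsSieved B E cs m a) : ∃ d ∈ E, d ∣ n := by
  induction cs generalizing m i a with
  | nil =>
    obtain ⟨hBm, hdvd⟩ := hs (by omega)
    obtain rfl : i = 0 := by
      by_contra hi0
      have := Nat.le_mul_of_pos_right m (Nat.pos_of_ne_zero hi0)
      omega
    simpa only [hi, mul_zero, add_zero] using hdvd
  | cons c cs ih =>
    rw [List.forall_mem_cons] at hcs
    have hin : i ≤ B / m := (Nat.le_div_iff_mul_le hm).2 (by rw [mul_comm]; omega)
    have hsplit : n = a + m * (i % c.1) + m * c.1 * (i / c.1) := by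
      rw [add_assoc, mul_assoc, ← mul_add, Nat.mod_add_div, hi]
    have htest : EulerTest c (a + m * (i % c.1)) := hcs.1.2.of_mod_eq <| by
      rw [hsplit, mul_comm m c.1, mul_assoc, Nat.add_mul_mod_self_left]
    refine ih hcs.2 (Nat.mul_pos hm hcs.1.1) hsplit (hs _ ?_ htest)
    exact lt_min (Nat.mod_lt _ hcs.1.1) (Nat.lt_succ_of_le ((Nat.mod_le _ _).trans hin))

theorem trivialTable_isSieved :
    IsSieved 2750000 [59, 61] trivialTable.dropLast.reverse 8 7 := by
  decide +kernel

theorem legendreSevenTable_one_isSieved :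
    IsSieved 15000000 [] (legendreSevenTable 1).dropLast.reverse 8 7 := by
  decide +kernel

theorem legendreSevenTable_neg_one_isSieved :
    IsSieved 15000000 [] (legendreSevenTable (-1)).dropLast.reverse 8 7 := by
  decide +kernel

variable {p : ℕ} [Fact p.Prime] {t : SignTable}

theorem eulerTest_of_quadraticChar (h4 : p % 4 = 3) {l : ℕ} (hl : l.Prime) (hl2 : l ≠ 2) {e : ℤ}
    (he : e ≠ 0) (hle : quadraticChar (ZMod p) l = e) : EulerTest (l, e) p := by
  have : Fact l.Prime := ⟨hl⟩
  have hlp : p ≠ l := by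
    rintro rfl
    rw [ZMod.natCast_self, quadraticChar_zero] at hle
    exact he hle.symm
  have hrecip : quadraticChar (ZMod l) (-(p : ZMod l)) = e := by
    rw [← hle, quadraticChar_odd_prime (by rw [ZMod.ringChar_zmod_n]; omega) hl2
      (by rwa [ZMod.ringChar_zmod_n]), ZMod.card, ZMod.χ₄_nat_three_mod_four h4, Int.cast_neg,
      Int.cast_one, neg_one_mul]
  have hsub : ((l - p % l : ℕ) : ZMod l) = -(p : ZMod l) := by
    rw [Nat.cast_sub (Nat.mod_lt _ hl.pos).le, ZMod.natCast_self, ZMod.natCast_mod, zero_sub]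
  have heuler : (e : ZMod l) = (-(p : ZMod l)) ^ (l / 2) := by
    rw [← hrecip, quadraticChar_eq_pow_of_char_ne_two' (by rwa [ZMod.ringChar_zmod_n]), ZMod.card]
  rw [EulerTest, Int.natCast_mod, ← ZMod.intCast_eq_intCast_iff', heuler, ← hsub]
  norm_cast

theorem mod_eight_eq_seven_of_quadraticChar_two (h4 : p % 4 = 3)
    (h2 : quadraticChar (ZMod p) 2 = 1) : p % 8 = 7 := by
  rw [quadraticChar_two (by rw [ZMod.ringChar_zmod_n]; omega), ZMod.card,
    ZMod.χ₈_nat_eq_if_mod_eight] at h2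
  split_ifs at h2 <;> omega

theorem IsSieved.le_or_exists_dvd {B : ℕ} {E : List ℕ} (hs : IsSieved B E t.dropLast.reverse 8 7)
    (ht : (2, 1) ∈ t ∧ ∀ a ∈ t.dropLast, a.1.Prime ∧ a.1 ≠ 2 ∧ a.2 ≠ 0) (h4 : p % 4 = 3)
    (hχ : t.Holds (quadraticChar (ZMod p))) : B ≤ p ∨ ∃ d ∈ E, d ∣ p := by
  have h8 : p % 8 = 7 := mod_eight_eq_seven_of_quadraticChar_two h4 (hχ _ ht.1)
  refine (le_or_gt B p).imp_right fun hpB =>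
    hs.exists_dvd hpB (fun c hc => ?_) (by norm_num) (i := p / 8) (by omega)
  have hct : c ∈ t.dropLast := List.mem_reverse.1 hc
  obtain ⟨hc, hc2, hc0⟩ := ht.2 c hct
  exact ⟨hc.pos, eulerTest_of_quadraticChar h4 hc hc2 hc0 (hχ c (List.mem_of_mem_dropLast hct))⟩

theorem le_of_trivialTable_holds (h4 : p % 4 = 3) (hp : 61 < p)
    (ht : trivialTable.Holds (quadraticChar (ZMod p))) : 2750000 ≤ p := by
  refine (trivialTable_isSieved.le_or_exists_dvd (by decide +kernel) h4 ht).resolve_right ?_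
  rintro ⟨d, hd, hdp⟩
  have hd61 : d ≠ 1 ∧ d ≤ 61 := (by decide : ∀ d ∈ [59, 61], d ≠ 1 ∧ d ≤ 61) d hd
  have hd1 : d = 1 ∨ d = p := (Nat.dvd_prime Fact.out).1 hdp
  omega

theorem le_of_legendreSevenTable_holds (h4 : p % 4 = 3) {e : ℤ} (he : e = 1 ∨ e = -1)
    (ht : (legendreSevenTable e).Holds (quadraticChar (ZMod p))) : 15000000 ≤ p := by
  rcases he with rfl | rfl
  · simpa using legendreSevenTable_one_isSieved.le_or_exists_dvd (by decide +kernel) h4 ht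
  · simpa using legendreSevenTable_neg_one_isSieved.le_or_exists_dvd (by decide +kernel) h4 ht

end Sieve

/-! ### Prime and prime power orders -/

theorem IsSeed.isIdempotentMaxNonassocOrder_prime {p : ℕ} [Fact p.Prime] (h4 : p % 4 = 3)
    {x y z : ZMod p} (hs : IsSeed (quadraticChar (ZMod p)) x y z) :
    IsIdempotentMaxNonassocOrder p := by
  simpa only [Nat.card_zmod] using
    hs.isIdempotentMaxNonassocOrder (isOddQuadratic_quadraticChar (by rwa [ZMod.card]))

instance : Fact (Nat.Prime 19) := ⟨by norm_num⟩

instance : Fact (Nat.Prime 23) := ⟨by norm_num⟩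

instance : Fact (Nat.Prime 31) := ⟨by norm_num⟩

instance : Fact (Nat.Prime 43) := ⟨by norm_num⟩

instance : Fact (Nat.Prime 47) := ⟨by norm_num⟩

instance : Fact (Nat.Prime 59) := ⟨by norm_num⟩

theorem isIdempotentMaxNonassocOrder_of_prime_of_le {p : ℕ} (hp : p.Prime) (h4 : p % 4 = 3)
    (h19 : 19 ≤ p) (h61 : p ≤ 61) : IsIdempotentMaxNonassocOrder p := by
  have hcases : p = 19 ∨ p = 23 ∨ p = 31 ∨ p = 43 ∨ p = 47 ∨ p = 59 := by
    interval_cases p <;> first | omega | exact absurd hp (by norm_num)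
  rcases hcases with rfl | rfl | rfl | rfl | rfl | rfl
  · exact IsSeed.isIdempotentMaxNonassocOrder_prime (x := 3) (y := 15) (z := 1) h4
      (by decide +kernel)
  · exact IsSeed.isIdempotentMaxNonassocOrder_prime (x := 5) (y := 15) (z := 1) h4
      (by decide +kernel)
  · exact IsSeed.isIdempotentMaxNonassocOrder_prime (x := 13) (y := 24) (z := 1) h4
      (by decide +kernel)
  · exact IsSeed.isIdempotentMaxNonassocOrder_prime (x := 3) (y := 20) (z := 1) h4
      (by decide +kernel)
  · exact IsSeed.isIdempotentMaxNonassocOrder_prime (x := 5) (y := 15) (z := 1) h4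
      (by decide +kernel)
  · exact IsSeed.isIdempotentMaxNonassocOrder_prime (x := 2) (y := 44) (z := 1) h4
      (by decide +kernel)

theorem exists_isSeed_of_prime_of_lt {p : ℕ} [Fact p.Prime] (h4 : p % 4 = 3) (h61 : 61 < p) :
    ∃ x y z, IsSeed (quadraticChar (ZMod p)) x y z := by
  have hne : ∀ q : ℕ, 0 < q → q < 62 → (q : ZMod p) ≠ 0 := fun q hq hq62 hq0 => by
    have := Nat.le_of_dvd hq ((ZMod.natCast_eq_zero_iff q p).1 hq0)
    omega
  rcases exists_isSeed_or_holds_table (isOddQuadratic_quadraticChar (by rwa [ZMod.card])) hne with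
    hseed | ht | ht | ht
  · exact hseed
  · exact exists_isSeed_of_quadraticChar_five h4 (le_of_trivialTable_holds h4 h61 ht)
      (ht (5, 1) (by decide))
  · exact exists_isSeed_of_quadraticChar_three h4 (le_of_legendreSevenTable_holds h4 (.inl rfl) ht)
      (ht (3, -1) (by decide))
  · exact exists_isSeed_of_quadraticChar_three h4 (le_of_legendreSevenTable_holds h4 (.inr rfl) ht)
      (ht (3, -1) (by decide))

theorem isIdempotentMaxNonassocOrder_of_prime {p : ℕ} (hp : p.Prime) (h4 : p % 4 = 3)
    (h19 : 19 ≤ p) : IsIdempotentMaxNonassocOrder p := by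
  rcases le_or_gt p 61 with h61 | h61
  · exact isIdempotentMaxNonassocOrder_of_prime_of_le hp h4 h19 h61
  · have : Fact p.Prime := ⟨hp⟩
    obtain ⟨x, y, z, hs⟩ := exists_isSeed_of_prime_of_lt h4 h61
    exact hs.isIdempotentMaxNonassocOrder_prime h4

theorem mod_four_eq_three_and_odd_of_pow {n k : ℕ} (h : n ^ k % 4 = 3) : n % 4 = 3 ∧ Odd k := by
  have hsq : ∀ a : ℕ, a ^ 2 % 4 = 0 ∨ a ^ 2 % 4 = 1 := fun a => by
    have ha : a % 4 < 4 := Nat.mod_lt _ (by norm_num)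
    rw [Nat.pow_mod]
    interval_cases a % 4 <;> decide
  obtain ⟨j, rfl | rfl⟩ := Nat.even_or_odd' k
  · rw [mul_comm, pow_mul] at h
    have := hsq (n ^ j)
    omega
  · refine ⟨?_, odd_two_mul_add_one j⟩
    rw [pow_succ, mul_comm 2, pow_mul, Nat.mul_mod] at h
    rcases hsq (n ^ j) with h0 | h1
    · simp [h0] at h
    · simpa [h1] using h

theorem IsIdempotentMaxNonassocOrder.pow_of_sq_of_cube {p k : ℕ}
    (hsq : IsIdempotentMaxNonassocOrder (p ^ 2)) (hcube : IsIdempotentMaxNonassocOrder (p ^ 3))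
    (hk : Odd k) (hk1 : k ≠ 1) : IsIdempotentMaxNonassocOrder (p ^ k) := by
  obtain ⟨j, rfl⟩ : ∃ j, k = 3 + 2 * j := by
    obtain ⟨i, rfl⟩ := hk
    exact ⟨i - 1, by omega⟩
  rw [pow_add, pow_mul]
  exact hcube.mul (hsq.pow j)

theorem isIdempotentMaxNonassocOrder_pow_of_lt {p k : ℕ} (hp : p.Prime) (hp4 : p % 4 = 3)
    (hp19 : p < 19) (hk : Odd k) (hk1 : k ≠ 1) : IsIdempotentMaxNonassocOrder (p ^ k) := by
  have hcases : p = 3 ∨ p = 7 ∨ p = 11 := by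
    interval_cases p <;> first | omega | exact absurd hp (by norm_num)
  rcases hcases with rfl | rfl | rfl
  · exact isIdempotentMaxNonassocOrder_three_sq.pow_of_sq_of_cube
      isIdempotentMaxNonassocOrder_three_cube hk hk1
  · exact isIdempotentMaxNonassocOrder_seven_sq.pow_of_sq_of_cube
      isIdempotentMaxNonassocOrder_seven_cube hk hk1
  · exact isIdempotentMaxNonassocOrder_eleven_sq.pow_of_sq_of_cube
      isIdempotentMaxNonassocOrder_eleven_cube hk hk1

theorem isIdempotentMaxNonassocOrder_of_isPrimePow {q : ℕ} (hq : IsPrimePow q) (h4 : q % 4 = 3)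
    (h19 : 19 ≤ q) : IsIdempotentMaxNonassocOrder q := by
  obtain ⟨p, k, hp, -, rfl⟩ := (isPrimePow_nat_iff q).1 hq
  obtain ⟨hp4, hk⟩ := mod_four_eq_three_and_odd_of_pow h4
  rcases le_or_gt 19 p with hp19 | hp19
  · exact (isIdempotentMaxNonassocOrder_of_prime hp hp4 hp19).pow k
  · refine isIdempotentMaxNonassocOrder_pow_of_lt hp hp4 hp19 hk ?_
    rintro rfl
    rw [pow_one] at h19
    omega

end MaxNonassoc

/-- Theorem 3.6: for every prime power `q ≡ 3 (mod 4)` with `q ≥ 19` there is a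
maximally nonassociative quasigroup of order `q`. -/
theorem exists_maxNonassoc_q3mod4 (q : ℕ) (hq : IsPrimePow q)
    (h4 : q % 4 = 3) (h19 : 19 ≤ q) :
    ∃ (Q : Type) (m : Q → Q → Q),
      Nat.card Q = q ∧
      (∀ a b : Q, (∃! x, m a x = b) ∧ (∃! y, m y a = b)) ∧
      Nat.card {t : Q × Q × Q //
        m (m t.1 t.2.1) t.2.2 = m t.1 (m t.2.1 t.2.2)} = q := by
  obtain ⟨Q, m, hcard, hm⟩ := MaxNonassoc.isIdempotentMaxNonassocOrder_of_isPrimePow hq h4 h19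
  exact ⟨Q, m, hcard,
    fun a b => ⟨(hm.bijective_left a).existsUnique b, (hm.bijective_right a).existsUnique b⟩,
    hm.card_assoc_eq.trans hcard⟩
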